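/- Fix κ ∈ (0,∞) and k ∈ ℕ. For each n let X_n(0) be a vertex exchangeable random element of A_n^{m(n)} with X_n(0) →d W for a multigraphon W with ρ(W) ∈ (0,∞), and suppose there exist λ > 0 and C < ∞ with E[e^{λ X_n(0,i,j)}] ≤ C for all n and i,j ∈ [n]. Let (Y_n^{[k]}(s))_{s≥0} be the A_k-valued process which, conditionally on X_n(0), has Y_n(0,i,j)=X_n(0,i,j), independent entries (Y_n(·,i,j))_{i≤j≤k} with Y_n(·,j,i)≡Y_n(·,i,j), where for i<j the process Y_n(·,i,j) is an M/M/∞ queue with service rate 1 and arrival rate d(X_n(0),i)·d(X_n(0),j)/(2m(n)), and Y_n(·,i,i)/2 is an M/M/∞ queue with service rate 1 and arrival rate d(X_n(0),i)²/(4m(n)). Then for every t ≥ 0 and every A ∈ A_k: lim_{n→∞} P( Y_n^{[k]}(t) = A ) = t_=(A, W_t), where W_t(x,y,k) = Σ_{h=0}^∞ W(x,y,h)·q(t,h,k, D(W,x)D(W,y)/ρ(W)) for x≠y and W_t(x,x,k) = 1[2|k]·Σ_{h=0}^∞ W(x,x,2h)·q(t,h,k/2, D(W,x)²/(2ρ(W))).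 -/

import Mathlib

/-!
The transition probability of a queue is a mixture of Poisson weights, hence `1`-Lipschitz in the
arrival rate (`poiP_lip`, `qMM_lip`). The probability that the `k × k` matrix of queues is in state
`A` is therefore a bounded function `queueProb` of the initial block, of the rescaled degrees `d / n`
and of the reciprocal of the density `2 m / n ^ 2`, with an explicit modulus of continuity in the
last two (`queueProb_diff_le`). The initial block converges in law by hypothesis; the point is that
the degrees are not functions of finitely many entries.

By exchangeability the first `k` vertices may be replaced by `k` independent uniform vertices, at
the cost of the collision probability, at most `k ^ 2 / n` (`yMarg_sampling`). The rescaled degree of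
a sampled vertex is then the conditional mean of an entry in its row. Sampling `L ^ 2` further
vertices and applying a conditional weak law of large numbers in mean square (`lln_sq`), the
degrees may be replaced by averages of `L ^ 2` sampled entries, with an error `O(1 / L)` that is
uniform in `n` (`sampling_bound`, `vert_replace`); the exponential moments enter only through the
uniform bound on second moments that they imply (`sq_moment_le`).

What is left depends on the leading block of size `k + L ^ 2` of the matrix read along sampled
vertices. Its point probabilities are expected induced densities `t_=(B, X_n)`, which converge to
`t_=(B, W)`, the point probabilities of an infinite `W`-random multigraph built from independent
uniform variables (`sampleP_real_subMat`). Adjacency matrices of a given size form a countable set,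
so by Scheffé's lemma expectations of all bounded functions converge (`tendsto_integral_blowM`).
Truncation and the second moment bound, which passes to the limit, give convergence of the densities
`2 m / n ^ 2` to `ρ(W)` (`tendsto_density`).

In the `W`-random multigraph the same law of large numbers turns row averages back into the degrees
`D(W, x)` (`sample_replace`), and integrating out the entries given the types yields exactly
`t_=(A, W_t)` (`integral_queueProb_sample`). Letting `n → ∞` and then `L → ∞` gives the claim.
-/

open MeasureTheory Filter Set
open scoped Classical ENNReal Topology BigOperators

noncomputable section

/-- `B : ℕ → ℕ → ℕ` is the adjacency matrix of a multigraph on vertex set `{0,…,n-1}`: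
symmetric, even diagonal entries (loops counted twice), vanishing outside `[0,n)²`. -/
def IsAdjOn (n : ℕ) (B : ℕ → ℕ → ℕ) : Prop :=
  (∀ i j, B i j = B j i) ∧ (∀ i, 2 ∣ B i i) ∧ ∀ i j, n ≤ i ∨ n ≤ j → B i j = 0

/-- Degree `d(B,i)` of vertex `i` in a multigraph on `n` vertices. -/
def degB (n : ℕ) (B : ℕ → ℕ → ℕ) (i : ℕ) : ℕ := ∑ j ∈ Finset.range n, B i j

/-- Adjacency matrix of a multigraph on `n` vertices with `m` edges. -/
def IsAdjOnM (n m : ℕ) (B : ℕ → ℕ → ℕ) : Prop :=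
  IsAdjOn n B ∧ ∑ i ∈ Finset.range n, ∑ j ∈ Finset.range n, B i j = 2 * m

/-- Top-left `k × k` submatrix (set to zero outside). -/
def subMat (k : ℕ) (B : ℕ → ℕ → ℕ) : ℕ → ℕ → ℕ :=
  fun i j => if i < k ∧ j < k then B i j else 0

/-- Induced homomorphism density `t_=(A,B)` of a `k`-vertex multigraph in an `n`-vertex one. -/
def tEqB (k n : ℕ) (A B : ℕ → ℕ → ℕ) : ℝ :=
  ((Finset.univ.filter fun φ : Fin k → Fin n =>
      ∀ i j : Fin k, A i j = B (φ i) (φ j)).card : ℝ) / (n : ℝ) ^ k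

/-- A multigraphon: symmetric, probability distribution on ℕ in each fibre over `[0,1]²`,
no odd diagonal values. -/
def IsMultigraphon (W : ℝ → ℝ → ℕ → ℝ) : Prop :=
  Measurable (fun p : ℝ × ℝ × ℕ => W p.1 p.2.1 p.2.2) ∧
  (∀ x y k, 0 ≤ W x y k ∧ W x y k ≤ 1) ∧
  (∀ x y k, W x y k = W y x k) ∧
  (∀ x ∈ Icc (0:ℝ) 1, ∀ y ∈ Icc (0:ℝ) 1, (∑' k : ℕ, W x y k) = 1) ∧
  (∀ x k, W x x (2 * k + 1) = 0)

/-- Induced homomorphism density `t_=(A,W)` of a multigraph in a multigraphon. -/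
def tEqW (k : ℕ) (A : ℕ → ℕ → ℕ) (W : ℝ → ℝ → ℕ → ℝ) : ℝ :=
  ∫ x : Fin k → ℝ in Set.univ.pi (fun _ : Fin k => Icc (0:ℝ) 1),
    ∏ i : Fin k, ∏ j ∈ Finset.univ.filter (fun j : Fin k => i ≤ j),
      W (x i) (x j) (A i j)

/-- The average degree `D(W,x)` of a multigraphon at `x`. -/
def degW (W : ℝ → ℝ → ℕ → ℝ) (x : ℝ) : ℝ :=
  ∫ y in Icc (0:ℝ) 1, ∑' k : ℕ, (k : ℝ) * W x y k

/-- The edge density `ρ(W)` of a multigraphon. -/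
def rhoW (W : ℝ → ℝ → ℕ → ℝ) : ℝ := ∫ x in Icc (0:ℝ) 1, degW W x

/-- One step of the edge reconnecting dynamics: the edge `{vold, w}` is replaced by `{vnew, w}`. -/
def stepER (B : ℕ → ℕ → ℕ) (vold w vnew : ℕ) : ℕ → ℕ → ℕ := fun a b =>
  B a b - (if a = vold ∧ b = w then 1 else 0) - (if a = w ∧ b = vold then 1 else 0)
    + (if a = vnew ∧ b = w then 1 else 0) + (if a = w ∧ b = vnew then 1 else 0)

/-- Transition probability of the edge reconnecting model with parameter `κ`
on multigraphs with `n` vertices and `m` edges. -/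
def transER (κ : ℝ) (n m : ℕ) (B B' : ℕ → ℕ → ℕ) : ℝ :=
  ∑ v ∈ Finset.range n, ∑ w ∈ Finset.range n, ∑ u ∈ Finset.range n,
    ((B v w : ℝ) / (2 * m)) * (((degB n B u : ℝ) + κ) / (2 * m + n * κ)) *
      (if B' = stepER B v w u then 1 else 0)

/-- `(X T)_{T≥0}` is an edge reconnecting model with parameter `κ` on `A_n^m`:
a Markov chain with the edge reconnecting transition probabilities. -/
def IsEdgeReconnecting (κ : ℝ) {Ω : Type*} [MeasurableSpace Ω] (μ : Measure Ω)
    (n m : ℕ) (X : ℕ → Ω → ℕ → ℕ → ℕ) : Prop :=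
  (∀ T i j, Measurable fun ω => X T ω i j) ∧
  (∀ T ω, IsAdjOnM n m (X T ω)) ∧
  ∀ (T : ℕ) (past : ℕ → ℕ → ℕ → ℕ) (B' : ℕ → ℕ → ℕ),
    μ {ω | (∀ S ≤ T, X S ω = past S) ∧ X (T + 1) ω = B'} =
      μ {ω | ∀ S ≤ T, X S ω = past S} * ENNReal.ofReal (transER κ n m (past T) B')

/-- Vertex exchangeability of a random adjacency matrix on `n` vertices. -/
def VertexExchangeable {Ω : Type*} [MeasurableSpace Ω] (μ : Measure Ω)
    (n : ℕ) (X0 : Ω → ℕ → ℕ → ℕ) : Prop :=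
  ∀ τ : Equiv.Perm ℕ, (∀ i, n ≤ i → τ i = i) →
    ∀ B : ℕ → ℕ → ℕ, μ {ω | X0 ω = B} = μ {ω | (fun i j => X0 ω (τ i) (τ j)) = B}

/-- Poisson point probability `p(k,λ)`. -/
def poiP (k : ℕ) (l : ℝ) : ℝ := Real.exp (-l) * l ^ k / (Nat.factorial k : ℝ)

/-- Binomial point probability `b(k,n,p)`. -/
def binP (k n : ℕ) (p : ℝ) : ℝ := (n.choose k : ℝ) * p ^ k * (1 - p) ^ (n - k)

/-- `q(t,h,k,μ)`: time-`t` transition probability from `h` to `k` of the M/M/∞ queue with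
arrival rate `μ` and service rate 1. -/
def qMM (t : ℝ) (h k : ℕ) (μ : ℝ) : ℝ :=
  ∑ l ∈ Finset.range (k + 1), binP l h (Real.exp (-t)) * poiP (k - l) ((1 - Real.exp (-t)) * μ)

/-- The multigraphon `W_t` describing the edge reconnecting model on the `n²` time scale. -/
def WtER (W : ℝ → ℝ → ℕ → ℝ) (t : ℝ) : ℝ → ℝ → ℕ → ℝ := fun x y k =>
  if x = y then
    (if 2 ∣ k then
      ∑' h : ℕ, W x x (2 * h) * qMM t h (k / 2) (degW W x ^ 2 / (2 * rhoW W))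
     else 0)
  else ∑' h : ℕ, W x y h * qMM t h k (degW W x * degW W y / rhoW W)

/-- Gamma density `g(x,α,β)`. -/
def gamP (x α β : ℝ) : ℝ :=
  if 0 < x then x ^ (α - 1) * (β ^ α * Real.exp (-(β * x)) / Real.Gamma α) else 0

/-- `τ(α,t) = α/(e^{αt}-1)`. -/
def tauCIR (α t : ℝ) : ℝ := α / (Real.exp (α * t) - 1)

/-- Transition density `f(t,z,y)` of the Cox–Ingersoll–Ross process with parameters `κ, ρ`. -/
def cirDens (κ ρ t z y : ℝ) : ℝ :=
  ∑' i : ℕ, poiP i (z * tauCIR (κ / ρ) t) * gamP y ((κ : ℝ) + i) (tauCIR (κ / ρ) t + κ / ρ)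

/-- The measure `dF₀` where `F₀(x) = Leb{y ∈ [0,1] : D(W,y) ≤ x}`: the push-forward of
Lebesgue measure on `[0,1]` under the average degree function. -/
def F0meas (W : ℝ → ℝ → ℕ → ℝ) : Measure ℝ :=
  Measure.map (degW W) (volume.restrict (Icc (0:ℝ) 1))

/-- The distribution function `F₀(x) = Leb{y ∈ [0,1] : D(W,y) ≤ x}`. -/
def F0fun (W : ℝ → ℝ → ℕ → ℝ) (x : ℝ) : ℝ :=
  (volume {y ∈ Icc (0:ℝ) 1 | degW W y ≤ x}).toReal

/-- Generalized inverse `F₀⁻¹(x) = min{z : F₀(z) ≥ x}`. -/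
def F0inv (W : ℝ → ℝ → ℕ → ℝ) (x : ℝ) : ℝ := sInf {z : ℝ | x ≤ F0fun W z}

/-- The mixed CIR density `f(t,y) = ∫₀^∞ f(t,z,y) dF₀(z)`. -/
def fCIRmix (κ ρ : ℝ) (W : ℝ → ℝ → ℕ → ℝ) (t y : ℝ) : ℝ :=
  ∫ z, cirDens κ ρ t z y ∂(F0meas W)

/-- The distribution function `F_t(x) = ∫₀ˣ f(t,y) dy`. -/
def Fcir (κ ρ : ℝ) (W : ℝ → ℝ → ℕ → ℝ) (t x : ℝ) : ℝ :=
  ∫ y in Ioc (0:ℝ) x, fCIRmix κ ρ W t y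

/-- Generalized inverse `F_t⁻¹(x) = min{z : F_t(z) ≥ x}`. -/
def FcirInv (κ ρ : ℝ) (W : ℝ → ℝ → ℕ → ℝ) (t x : ℝ) : ℝ :=
  sInf {z : ℝ | x ≤ Fcir κ ρ W t z}

/-- The multigraphon `Ŵ_t` describing the edge reconnecting model on the `n³` time scale. -/
def WhatER (κ : ℝ) (W : ℝ → ℝ → ℕ → ℝ) (t : ℝ) : ℝ → ℝ → ℕ → ℝ := fun x y k =>
  if x = y then
    (if 2 ∣ k then poiP (k / 2) (FcirInv κ (rhoW W) W t x ^ 2 / (2 * rhoW W)) else 0)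
  else poiP k (FcirInv κ (rhoW W) W t x * FcirInv κ (rhoW W) W t y / rhoW W)

/-- The product measure on `ℝ^k` of `k` i.i.d. coordinates with density `f(t,·)`. -/
def cirPi (κ ρ : ℝ) (W : ℝ → ℝ → ℕ → ℝ) (t : ℝ) (k : ℕ) : Measure (Fin k → ℝ) :=
  volume.withDensity fun z => ∏ i : Fin k, ENNReal.ofReal (fCIRmix κ ρ W t (z i))

/-- Condition (E): uniform exponential moment bound for the initial multigraphs. -/
def CondE (B : (n : ℕ) → ℕ → ℕ → ℕ) : Prop :=
  ∃ lam : ℝ, 0 < lam ∧ ∃ C : ℝ, ∀ n : ℕ,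
    (∑ i ∈ Finset.range n, ∑ j ∈ (Finset.range n).filter (fun j => i < j),
        Real.exp (lam * (B n i j : ℝ))) ≤ C * (n.choose 2 : ℝ) ∧
    (∑ i ∈ Finset.range n, Real.exp (lam * (B n i i : ℝ))) ≤ C * (n : ℝ)

/-- Convergence `B_n → W` of a sequence of multigraphs to a multigraphon. -/
def GraphSeqConvTo (B : (n : ℕ) → ℕ → ℕ → ℕ) (W : ℝ → ℝ → ℕ → ℝ) : Prop :=
  ∀ (k : ℕ) (A : ℕ → ℕ → ℕ), IsAdjOn k A →
    Tendsto (fun n => tEqB k n A (B n)) atTop (𝓝 (tEqW k A W))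


/-- Probability that the independent-queue process started from `B0`, with arrival rates given
by the degrees of `B0` (rate `d_i d_j/(2m)` off the diagonal, `d_i²/(4m)` for halved loops),
is in state `A` at time `t`: the product of the one-dimensional M/M/∞ marginals. -/
def yMarg (k n m : ℕ) (B0 : ℕ → ℕ → ℕ) (t : ℝ) (A : ℕ → ℕ → ℕ) : ℝ :=
  ∏ i ∈ Finset.range k, ∏ j ∈ (Finset.range k).filter (fun j => i ≤ j),
    if i = j then
      (if 2 ∣ B0 i i ∧ 2 ∣ A i i then
        qMM t (B0 i i / 2) (A i i / 2) ((degB n B0 i : ℝ) ^ 2 / (4 * (m : ℝ)))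
       else 0)
    else qMM t (B0 i j) (A i j) ((degB n B0 i : ℝ) * (degB n B0 j : ℝ) / (2 * (m : ℝ)))

section
open ProbabilityTheory

/-! ### Transition probabilities as functions of the arrival rates -/

lemma poiP_nonneg (k : ℕ) {l : ℝ} (hl : 0 ≤ l) : 0 ≤ poiP k l := by
  unfold poiP; positivity

lemma poiP_le_one (k : ℕ) {l : ℝ} (hl : 0 ≤ l) : poiP k l ≤ 1 := by
  have h := Real.pow_div_factorial_le_exp l hl k
  have : poiP k l = Real.exp (-l) * (l ^ k / (Nat.factorial k : ℝ)) := by unfold poiP; ring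
  rw [this]
  calc Real.exp (-l) * (l ^ k / (Nat.factorial k : ℝ)) ≤ Real.exp (-l) * Real.exp l := by gcongr
    _ = 1 := by rw [← Real.exp_add]; simp

lemma continuous_poiP (k : ℕ) : Continuous (poiP k) := by
  unfold poiP; fun_prop

lemma hasDerivAt_poiP_zero (l : ℝ) : HasDerivAt (poiP 0) (-poiP 0 l) l := by
  have h := (hasDerivAt_neg l).exp
  have h0 : poiP 0 = fun l => Real.exp (-l) := by funext x; simp [poiP]
  rw [h0]; simpa using h

lemma hasDerivAt_poiP_succ (k : ℕ) (l : ℝ) :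
    HasDerivAt (poiP (k + 1)) (poiP k l - poiP (k + 1) l) l := by
  have h := (((hasDerivAt_neg l).exp).mul (hasDerivAt_pow (k + 1) l)).div_const
    (Nat.factorial (k + 1) : ℝ)
  have h0 : poiP (k + 1) = fun l => Real.exp (-l) * l ^ (k + 1) / (Nat.factorial (k + 1) : ℝ) := rfl
  rw [h0]
  refine h.congr_deriv ?_
  have hk : (Nat.factorial k : ℝ) ≠ 0 := by positivity
  have hk1 : ((k : ℝ) + 1) ≠ 0 := by positivity
  simp only [poiP, Nat.factorial_succ]
  push_cast
  field_simp
  ring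

/-- Poisson weights are `1`-Lipschitz in the rate: the derivative is a difference of two
Poisson weights. -/
lemma poiP_lip (k : ℕ) {a b : ℝ} (ha : 0 ≤ a) (hb : 0 ≤ b) :
    |poiP k a - poiP k b| ≤ |a - b| := by
  have key : ∀ f' : ℝ → ℝ, (∀ x, HasDerivAt (poiP k) (f' x) x) → (∀ x ∈ Ici (0:ℝ), |f' x| ≤ 1) →
      |poiP k a - poiP k b| ≤ |a - b| := by
    intro f' h1 h2
    have := (convex_Ici (0:ℝ)).norm_image_sub_le_of_norm_hasDerivWithin_le
      (f := poiP k) (f' := f') (C := 1) (fun x _ => (h1 x).hasDerivWithinAt)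
      (fun x hx => by simpa using h2 x hx) (mem_Ici.2 hb) (mem_Ici.2 ha)
    simpa using this
  cases k with
  | zero =>
    refine key _ hasDerivAt_poiP_zero fun x hx => ?_
    rw [abs_neg, abs_of_nonneg (poiP_nonneg 0 hx)]
    exact poiP_le_one 0 hx
  | succ k =>
    refine key _ (hasDerivAt_poiP_succ k) fun x hx => ?_
    have h1 := poiP_nonneg k hx
    have h2 := poiP_le_one k hx
    have h3 := poiP_nonneg (k + 1) hx
    have h4 := poiP_le_one (k + 1) hx
    rw [abs_le]; constructor <;> linarith

lemma binP_nonneg (l h : ℕ) {p : ℝ} (hp : 0 ≤ p) (hp1 : p ≤ 1) : 0 ≤ binP l h p := by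
  unfold binP
  have : 0 ≤ 1 - p := by linarith
  positivity

lemma sum_binP_le (k h : ℕ) {p : ℝ} (hp : 0 ≤ p) (hp1 : p ≤ 1) :
    ∑ l ∈ Finset.range k, binP l h p ≤ 1 := by
  have h1 : ∑ l ∈ Finset.range (h + 1), binP l h p = 1 := by
    have := add_pow p (1 - p) h
    rw [show p + (1 - p) = 1 by ring, one_pow] at this
    rw [this]
    refine Finset.sum_congr rfl fun l _ => ?_
    unfold binP; ring
  have h2 : ∑ l ∈ Finset.range k, binP l h p ≤ ∑ l ∈ Finset.range (max k (h + 1)), binP l h p :=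
    Finset.sum_le_sum_of_subset_of_nonneg (by intro x; simp; omega)
      fun i _ _ => binP_nonneg i h hp hp1
  have h3 : ∑ l ∈ Finset.range (h + 1), binP l h p =
      ∑ l ∈ Finset.range (max k (h + 1)), binP l h p := by
    refine Finset.sum_subset (by intro x; simp; omega) fun x _ hx => ?_
    have : h < x := by simpa using hx
    simp [binP, Nat.choose_eq_zero_of_lt this]
  linarith

section q
variable {t : ℝ}

lemma exp_mem (ht : 0 ≤ t) : 0 ≤ Real.exp (-t) ∧ Real.exp (-t) ≤ 1 :=
  ⟨(Real.exp_pos _).le, Real.exp_le_one_iff.2 (by linarith)⟩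

lemma qMM_nonneg (ht : 0 ≤ t) (h k : ℕ) {r : ℝ} (hr : 0 ≤ r) : 0 ≤ qMM t h k r := by
  obtain ⟨h1, h2⟩ := exp_mem ht
  exact Finset.sum_nonneg fun l _ => mul_nonneg (binP_nonneg l h h1 h2)
    (poiP_nonneg _ (mul_nonneg (by linarith) hr))

lemma qMM_le_one (ht : 0 ≤ t) (h k : ℕ) {r : ℝ} (hr : 0 ≤ r) : qMM t h k r ≤ 1 := by
  obtain ⟨h1, h2⟩ := exp_mem ht
  refine le_trans (Finset.sum_le_sum (g := fun l => binP l h (Real.exp (-t))) fun l _ => ?_)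
    (sum_binP_le (k + 1) h h1 h2)
  exact mul_le_of_le_one_right (binP_nonneg l h h1 h2)
    (poiP_le_one _ (mul_nonneg (by linarith) hr))

/-- The total weight of the binomial factors is at most `1`, so the Lipschitz bound of the Poisson
weights is inherited. -/
lemma qMM_lip (ht : 0 ≤ t) (h k : ℕ) {r r' : ℝ} (hr : 0 ≤ r) (hr' : 0 ≤ r') :
    |qMM t h k r - qMM t h k r'| ≤ |r - r'| := by
  obtain ⟨h1, h2⟩ := exp_mem ht
  unfold qMM
  rw [← Finset.sum_sub_distrib]
  refine le_trans (Finset.abs_sum_le_sum_abs _ _) ?_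
  refine le_trans (Finset.sum_le_sum
    (g := fun l => binP l h (Real.exp (-t)) * |r - r'|) fun l _ => ?_) ?_
  · rw [← mul_sub, abs_mul, abs_of_nonneg (binP_nonneg l h h1 h2)]
    refine mul_le_mul_of_nonneg_left ?_ (binP_nonneg l h h1 h2)
    refine (poiP_lip _ (mul_nonneg (by linarith) hr) (mul_nonneg (by linarith) hr')).trans ?_
    rw [← mul_sub, abs_mul, abs_of_nonneg (by linarith)]
    exact mul_le_of_le_one_left (abs_nonneg _) (by linarith)
  · rw [← Finset.sum_mul]
    exact mul_le_of_le_one_left (abs_nonneg _) (sum_binP_le (k + 1) h h1 h2)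

lemma continuous_qMM (h k : ℕ) : Continuous (qMM t h k) := by
  unfold qMM
  have := continuous_poiP
  fun_prop

end q

/-- The transition probability of the entry `(i,j)` from `h` to `A i j` in time `t`, when the
arrival rate of an off-diagonal entry is `r`; the halved diagonal entries have arrival
rate `r / 2`. -/
def entryQ (t : ℝ) (A : ℕ → ℕ → ℕ) (i j h : ℕ) (r : ℝ) : ℝ :=
  if i = j then (if 2 ∣ h ∧ 2 ∣ A i i then qMM t (h / 2) (A i i / 2) (r / 2) else 0)
  else qMM t h (A i j) r

lemma entryQ_nonneg {t : ℝ} (ht : 0 ≤ t) (A : ℕ → ℕ → ℕ) (i j h : ℕ) {r : ℝ} (hr : 0 ≤ r) :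
    0 ≤ entryQ t A i j h r := by
  unfold entryQ
  split_ifs
  · exact qMM_nonneg ht _ _ (by positivity)
  · exact le_rfl
  · exact qMM_nonneg ht _ _ hr

lemma entryQ_le_one {t : ℝ} (ht : 0 ≤ t) (A : ℕ → ℕ → ℕ) (i j h : ℕ) {r : ℝ} (hr : 0 ≤ r) :
    entryQ t A i j h r ≤ 1 := by
  unfold entryQ
  split_ifs
  · exact qMM_le_one ht _ _ (by positivity)
  · exact zero_le_one
  · exact qMM_le_one ht _ _ hr

lemma entryQ_lip {t : ℝ} (ht : 0 ≤ t) (A : ℕ → ℕ → ℕ) (i j h : ℕ) {r r' : ℝ}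
    (hr : 0 ≤ r) (hr' : 0 ≤ r') :
    |entryQ t A i j h r - entryQ t A i j h r'| ≤ |r - r'| := by
  unfold entryQ
  split_ifs
  · refine (qMM_lip ht _ _ (by positivity) (by positivity)).trans ?_
    rw [← sub_div, abs_div, abs_two]
    linarith [abs_nonneg (r - r')]
  · simp
  · exact qMM_lip ht _ _ hr hr'

lemma continuous_entryQ (t : ℝ) (A : ℕ → ℕ → ℕ) (i j h : ℕ) :
    Continuous (entryQ t A i j h) := by
  have := @continuous_qMM t
  unfold entryQ
  split_ifs <;> fun_prop

lemma measurable_entryQ (t : ℝ) (A : ℕ → ℕ → ℕ) (i j : ℕ) :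
    Measurable (fun p : ℕ × ℝ => entryQ t A i j p.1 p.2) :=
  measurable_from_prod_countable_right fun h => (continuous_entryQ t A i j h).measurable

/-- The pairs `i ≤ j < k` indexing the independent entries of a symmetric `k × k` matrix. -/
def upperPairs (k : ℕ) : Finset (ℕ × ℕ) :=
  (Finset.range k ×ˢ Finset.range k).filter fun e => e.1 ≤ e.2

/-- The probability that the queues started from `B` reach `A` at time `t`, when the rescaled
degrees are `s` and the reciprocal edge density is `a`. -/
def queueProb (t : ℝ) (A : ℕ → ℕ → ℕ) (k : ℕ) (B : ℕ → ℕ → ℕ) (s : ℕ → ℝ) (a : ℝ) : ℝ :=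
  ∏ e ∈ upperPairs k, entryQ t A e.1 e.2 (B e.1 e.2) (a * (s e.1 * s e.2))

lemma queueProb_nonneg {t : ℝ} (ht : 0 ≤ t) (A : ℕ → ℕ → ℕ) (k : ℕ) (B : ℕ → ℕ → ℕ) {s : ℕ → ℝ}
    (hs : ∀ i, 0 ≤ s i) {a : ℝ} (ha : 0 ≤ a) : 0 ≤ queueProb t A k B s a :=
  Finset.prod_nonneg fun _ _ => entryQ_nonneg ht _ _ _ _ (mul_nonneg ha (mul_nonneg (hs _) (hs _)))

lemma queueProb_le_one {t : ℝ} (ht : 0 ≤ t) (A : ℕ → ℕ → ℕ) (k : ℕ) (B : ℕ → ℕ → ℕ) {s : ℕ → ℝ}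
    (hs : ∀ i, 0 ≤ s i) {a : ℝ} (ha : 0 ≤ a) : queueProb t A k B s a ≤ 1 :=
  Finset.prod_le_one
    (fun _ _ => entryQ_nonneg ht _ _ _ _ (mul_nonneg ha (mul_nonneg (hs _) (hs _))))
    (fun _ _ => entryQ_le_one ht _ _ _ _ (mul_nonneg ha (mul_nonneg (hs _) (hs _))))

lemma abs_prod_sub_prod_le {ι : Type*} (S : Finset ι) (f g : ι → ℝ)
    (hf : ∀ i ∈ S, 0 ≤ f i ∧ f i ≤ 1) (hg : ∀ i ∈ S, 0 ≤ g i ∧ g i ≤ 1) :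
    |∏ i ∈ S, f i - ∏ i ∈ S, g i| ≤ ∑ i ∈ S, |f i - g i| := by
  induction S using Finset.induction_on with
  | empty => simp
  | insert a S ha ih =>
    rw [Finset.prod_insert ha, Finset.prod_insert ha, Finset.sum_insert ha]
    have ih' := ih (fun i hi => hf i (Finset.mem_insert_of_mem hi))
      (fun i hi => hg i (Finset.mem_insert_of_mem hi))
    have h1 := hf a (Finset.mem_insert_self _ _)
    have hP : |∏ i ∈ S, g i| ≤ 1 := by
      rw [abs_of_nonneg (Finset.prod_nonneg fun i hi => (hg i (Finset.mem_insert_of_mem hi)).1)]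
      exact Finset.prod_le_one (fun i hi => (hg i (Finset.mem_insert_of_mem hi)).1)
        (fun i hi => (hg i (Finset.mem_insert_of_mem hi)).2)
    calc |f a * ∏ i ∈ S, f i - g a * ∏ i ∈ S, g i|
        = |f a * (∏ i ∈ S, f i - ∏ i ∈ S, g i) + (f a - g a) * ∏ i ∈ S, g i| := by ring_nf
      _ ≤ |f a * (∏ i ∈ S, f i - ∏ i ∈ S, g i)| + |(f a - g a) * ∏ i ∈ S, g i| := abs_add_le _ _
      _ ≤ |f a - g a| + ∑ i ∈ S, |f i - g i| := by
        rw [abs_mul, abs_mul, abs_of_nonneg h1.1]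
        have : f a * |∏ i ∈ S, f i - ∏ i ∈ S, g i| ≤ |∏ i ∈ S, f i - ∏ i ∈ S, g i| :=
          mul_le_of_le_one_left (abs_nonneg _) h1.2
        have : |f a - g a| * |∏ i ∈ S, g i| ≤ |f a - g a| :=
          mul_le_of_le_one_right (abs_nonneg _) hP
        linarith

/-- Difference of two products of rescaled degrees. Young's inequality with the free parameter `L`
separates the degree, controlled by `Q`, from its estimation error, controlled by `R`: with `R` of
order `L⁻²` both terms are of order `L⁻¹`. -/
lemma rate_diff_le {a b x y x' y' Q R L : ℝ} (hb : 0 ≤ b) (hL : 1 ≤ L)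
    (hx : x ^ 2 ≤ Q) (hy : y ^ 2 ≤ Q) (hx' : (x' - x) ^ 2 ≤ R) (hy' : (y' - y) ^ 2 ≤ R) :
    |a * (x * y) - b * (x' * y')| ≤ |a - b| * Q + b * (Q / L + (L + 1) * R) := by
  have hL0 : 0 < L := by linarith
  have young : ∀ u v : ℝ, |u * v| ≤ (u ^ 2 / L + L * v ^ 2) / 2 := by
    intro u v
    have h1 : u ^ 2 / L + L * v ^ 2 - 2 * |u| * |v| = (|u| - L * |v|) ^ 2 / L := by
      field_simp
      rw [sub_sq, mul_pow, sq_abs, sq_abs]; ring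
    have h2 : 0 ≤ (|u| - L * |v|) ^ 2 / L := by positivity
    rw [abs_mul]; linarith
  have e1 : |x * y| ≤ Q := by
    rw [abs_le]; constructor <;> nlinarith [sq_nonneg (x - y), sq_nonneg (x + y)]
  have e2 := young x (y' - y)
  have e3 := young y (x' - x)
  have e4 : |(x' - x) * (y' - y)| ≤ R := by
    rw [abs_le]
    constructor <;> nlinarith [sq_nonneg ((x' - x) - (y' - y)), sq_nonneg ((x' - x) + (y' - y))]
  have q1 : x ^ 2 / L ≤ Q / L := by gcongr
  have q2 : y ^ 2 / L ≤ Q / L := by gcongr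
  have q3 : L * (x' - x) ^ 2 ≤ L * R := by gcongr
  have q4 : L * (y' - y) ^ 2 ≤ L * R := by gcongr
  have e5 : |x' * y' - x * y| ≤ Q / L + (L + 1) * R := by
    have : x' * y' - x * y = x * (y' - y) + y * (x' - x) + (x' - x) * (y' - y) := by ring
    rw [this]
    refine (abs_add_three _ _ _).trans ?_
    linarith
  calc |a * (x * y) - b * (x' * y')| = |(a - b) * (x * y) - b * (x' * y' - x * y)| := by ring_nf
    _ ≤ |(a - b) * (x * y)| + |b * (x' * y' - x * y)| := abs_sub _ _
    _ ≤ _ := by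
      rw [abs_mul (a - b), abs_mul b, abs_of_nonneg hb]
      gcongr

/-- Deterministic stability of `queueProb` under a perturbation of degrees and density. -/
lemma queueProb_diff_le {t : ℝ} (ht : 0 ≤ t) (A : ℕ → ℕ → ℕ) (k : ℕ) (B : ℕ → ℕ → ℕ)
    {s s' : ℕ → ℝ} (hs : ∀ i, 0 ≤ s i) (hs' : ∀ i, 0 ≤ s' i) {a b L : ℝ}
    (ha : 0 ≤ a) (hb : 0 ≤ b) (hL : 1 ≤ L) :
    |queueProb t A k B s a - queueProb t A k B s' b| ≤
      (k : ℝ) ^ 2 * (|a - b| * (∑ i ∈ Finset.range k, s i ^ 2) +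
        b * ((∑ i ∈ Finset.range k, s i ^ 2) / L +
          (L + 1) * ∑ i ∈ Finset.range k, (s' i - s i) ^ 2)) := by
  set Q := ∑ i ∈ Finset.range k, s i ^ 2 with hQ
  set R := ∑ i ∈ Finset.range k, (s' i - s i) ^ 2 with hR
  have hpos : ∀ e : ℕ × ℕ, 0 ≤ a * (s e.1 * s e.2) := fun e =>
    mul_nonneg ha (mul_nonneg (hs _) (hs _))
  have hpos' : ∀ e : ℕ × ℕ, 0 ≤ b * (s' e.1 * s' e.2) := fun e =>
    mul_nonneg hb (mul_nonneg (hs' _) (hs' _))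
  have hQ0 : 0 ≤ Q := Finset.sum_nonneg fun i _ => sq_nonneg _
  have hR0 : 0 ≤ R := Finset.sum_nonneg fun i _ => sq_nonneg _
  have hc : ((upperPairs k).card : ℝ) ≤ (k : ℝ) ^ 2 := by
    have : (upperPairs k).card ≤ (Finset.range k ×ˢ Finset.range k).card :=
      Finset.card_le_card (Finset.filter_subset _ _)
    rw [Finset.card_product, Finset.card_range] at this
    rw [sq]; exact_mod_cast this
  refine (abs_prod_sub_prod_le _ _ _
    (fun e _ => ⟨entryQ_nonneg ht _ _ _ _ (hpos e), entryQ_le_one ht _ _ _ _ (hpos e)⟩)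
    (fun e _ => ⟨entryQ_nonneg ht _ _ _ _ (hpos' e), entryQ_le_one ht _ _ _ _ (hpos' e)⟩)).trans ?_
  refine (Finset.sum_le_card_nsmul _ _ (|a - b| * Q + b * (Q / L + (L + 1) * R)) ?_).trans ?_
  · intro e he
    obtain ⟨h1, h2⟩ : e.1 < k ∧ e.2 < k := by
      simp only [upperPairs, Finset.mem_filter, Finset.mem_product, Finset.mem_range] at he
      exact he.1
    refine (entryQ_lip ht _ _ _ _ (hpos e) (hpos' e)).trans ?_
    have hS : ∀ (f : ℕ → ℝ) i, i < k → f i ^ 2 ≤ ∑ i ∈ Finset.range k, f i ^ 2 := fun f i hi =>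
      Finset.single_le_sum (f := fun i => f i ^ 2) (fun j _ => sq_nonneg _) (Finset.mem_range.2 hi)
    exact rate_diff_le hb hL (hS s _ h1) (hS s _ h2) (hS (fun i => s' i - s i) _ h1)
      (hS (fun i => s' i - s i) _ h2)
  · rw [nsmul_eq_mul]
    have hL0 : 0 < L := by linarith
    gcongr

/-! ### A conditional weak law of large numbers in mean square -/

section lln
variable {V Y : Type*} [MeasurableSpace V] [MeasurableSpace Y] {ν : Measure V} {π : Measure Y}
  [IsProbabilityMeasure ν] [IsProbabilityMeasure π] {h : V → Y → ℝ}

lemma sq_integral_le_integral_sq {f : Y → ℝ} (hf : MemLp f 2 π) :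
    (∫ y, f y ∂π) ^ 2 ≤ ∫ y, f y ^ 2 ∂π := by
  have h1 := variance_nonneg f π
  rw [variance_eq_sub hf] at h1
  simpa using h1

lemma ae_memLp_section (hm : Measurable (Function.uncurry h))
    (h2 : Integrable (fun p : V × Y => h p.1 p.2 ^ 2) (ν.prod π)) :
    ∀ᵐ v ∂ν, MemLp (h v) 2 π := by
  filter_upwards [h2.prod_right_ae] with v hv
  exact (memLp_two_iff_integrable_sq (hm.of_uncurry_left).aestronglyMeasurable).2 hv

lemma measurable_condMean (hm : Measurable (Function.uncurry h)) :
    Measurable (fun v => ∫ y, h v y ∂π) :=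
  (StronglyMeasurable.integral_prod_right (f := h) hm.stronglyMeasurable).measurable

/-- A conditional mean is square integrable, with second moment at most that of the variable. -/
lemma condMean_sq (hm : Measurable (Function.uncurry h))
    (h2 : Integrable (fun p : V × Y => h p.1 p.2 ^ 2) (ν.prod π)) :
    Integrable (fun v => (∫ y, h v y ∂π) ^ 2) ν ∧
      ∫ v, (∫ y, h v y ∂π) ^ 2 ∂ν ≤ ∫ p, h p.1 p.2 ^ 2 ∂(ν.prod π) := by
  have hae : ∀ᵐ v ∂ν, (∫ y, h v y ∂π) ^ 2 ≤ ∫ y, h v y ^ 2 ∂π := by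
    filter_upwards [ae_memLp_section hm h2] with v hv using sq_integral_le_integral_sq hv
  have hi : Integrable (fun v => (∫ y, h v y ∂π) ^ 2) ν := by
    refine Integrable.mono' h2.integral_prod_left
      ((measurable_condMean hm).pow_const 2).aestronglyMeasurable ?_
    filter_upwards [hae] with v hv
    rwa [Real.norm_of_nonneg (sq_nonneg _)]
  refine ⟨hi, ?_⟩
  rw [integral_prod _ h2]
  exact integral_mono_ae hi h2.integral_prod_left hae

/-- Centring at the conditional mean does not increase the second moment. -/
lemma centred_sq (hm : Measurable (Function.uncurry h))
    (h2 : Integrable (fun p : V × Y => h p.1 p.2 ^ 2) (ν.prod π)) :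
    Integrable (fun p : V × Y => (h p.1 p.2 - ∫ y, h p.1 y ∂π) ^ 2) (ν.prod π) ∧
      ∫ p, (h p.1 p.2 - ∫ y, h p.1 y ∂π) ^ 2 ∂(ν.prod π) ≤ ∫ p, h p.1 p.2 ^ 2 ∂(ν.prod π) := by
  have hmD := measurable_condMean (π := π) hm
  have hD : Integrable (fun p : V × Y => (∫ y, h p.1 y ∂π) ^ 2) (ν.prod π) :=
    (condMean_sq hm h2).1.comp_fst π
  have hmh : Measurable (fun p : V × Y => h p.1 p.2) := hm
  have hmD' : Measurable (fun p : V × Y => ∫ y, h p.1 y ∂π) := hmD.comp measurable_fst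
  have hi : Integrable (fun p : V × Y => (h p.1 p.2 - ∫ y, h p.1 y ∂π) ^ 2) (ν.prod π) := by
    have a1 := (memLp_two_iff_integrable_sq hmh.aestronglyMeasurable).2 h2
    have a2 := (memLp_two_iff_integrable_sq hmD'.aestronglyMeasurable).2 hD
    exact (a1.sub a2).integrable_sq
  refine ⟨hi, ?_⟩
  rw [integral_prod _ h2, integral_prod _ hi]
  refine integral_mono_ae hi.integral_prod_left h2.integral_prod_left ?_
  filter_upwards [ae_memLp_section hm h2] with v hv
  have h3 := variance_le_expectation_sq (μ := π) hv.1
  rw [variance_eq_integral hv.1.aemeasurable] at h3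
  simpa using h3

variable {Ω : Type*} [MeasurableSpace Ω] {P : Measure Ω}
  {ξ : Ω → V} {η : ℕ → Ω → Y}

/-- Quantitative weak law of large numbers conditionally on `ξ`: the variables `h ξ (η j)` are
conditionally independent and identically distributed, so the conditional variance of their
average decays like `1 / K`. -/
lemma lln_sq (hm : Measurable (Function.uncurry h))
    (h2 : Integrable (fun p : V × Y => h p.1 p.2 ^ 2) (ν.prod π))
    (htri : ∀ a b, a ≠ b →
      MeasurePreserving (fun ω => (ξ ω, (η a ω, η b ω))) P (ν.prod (π.prod π)))
    (K : ℕ) (hK : 0 < K) :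
    Integrable (fun ω => ((∑ j ∈ Finset.range K, h (ξ ω) (η j ω)) / K -
        ∫ y, h (ξ ω) y ∂π) ^ 2) P ∧
      ∫ ω, ((∑ j ∈ Finset.range K, h (ξ ω) (η j ω)) / K - ∫ y, h (ξ ω) y ∂π) ^ 2 ∂P ≤
        (∫ p, h p.1 p.2 ^ 2 ∂(ν.prod π)) / K := by
  set Z : V × Y → ℝ := fun p => h p.1 p.2 - ∫ y, h p.1 y ∂π with hZ
  have hmZ : Measurable Z := by
    have hmh : Measurable (fun p : V × Y => h p.1 p.2) := hm
    exact hmh.sub ((measurable_condMean hm).comp measurable_fst)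
  have hpair : ∀ a, MeasurePreserving (fun ω => (ξ ω, η a ω)) P (ν.prod π) := fun a =>
    ((MeasurePreserving.id ν).prod (measurePreserving_fst (μ := π) (ν := π))).comp
      (htri a (a + 1) (by omega))
  obtain ⟨hZi, hZle⟩ := centred_sq hm h2
  have hZL : ∀ a, MemLp (fun ω => Z (ξ ω, η a ω)) 2 P := fun a =>
    ((memLp_two_iff_integrable_sq hmZ.aestronglyMeasurable).2 hZi).comp_measurePreserving (hpair a)
  have h_pair : ∀ a b, Integrable (fun ω => Z (ξ ω, η a ω) * Z (ξ ω, η b ω)) P := fun a b =>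
    (hZL a).integrable_mul (hZL b)
  have hdiag : ∀ a, ∫ ω, Z (ξ ω, η a ω) * Z (ξ ω, η a ω) ∂P ≤
      ∫ p, h p.1 p.2 ^ 2 ∂(ν.prod π) := by
    intro a
    have : ∫ ω, Z (ξ ω, η a ω) ^ 2 ∂P = ∫ p, Z p ^ 2 ∂(ν.prod π) := by
      rw [← (hpair a).map_eq, integral_map (hpair a).measurable.aemeasurable
        (hmZ.pow_const 2).aestronglyMeasurable]
    simp_rw [← sq]
    rw [this]; exact hZle
  have hmean : ∀ᵐ v ∂ν, ∫ y, Z (v, y) ∂π = 0 := by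
    filter_upwards [ae_memLp_section hm h2] with v hv
    simp only [hZ]
    rw [integral_sub (hv.integrable (by norm_num)) (integrable_const _)]
    simp
  have hoff : ∀ a b, a ≠ b → ∫ ω, Z (ξ ω, η a ω) * Z (ξ ω, η b ω) ∂P = 0 := by
    intro a b hab
    have hmF : Measurable (fun q : V × (Y × Y) => Z (q.1, q.2.1) * Z (q.1, q.2.2)) := by fun_prop
    have hFi : Integrable (fun q : V × (Y × Y) => Z (q.1, q.2.1) * Z (q.1, q.2.2))
        (ν.prod (π.prod π)) :=
      ((htri a b hab).integrable_comp hmF.aestronglyMeasurable).1 (h_pair a b)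
    have : ∫ ω, Z (ξ ω, η a ω) * Z (ξ ω, η b ω) ∂P =
        ∫ q, Z (q.1, q.2.1) * Z (q.1, q.2.2) ∂(ν.prod (π.prod π)) := by
      rw [← (htri a b hab).map_eq, integral_map (htri a b hab).measurable.aemeasurable
        hmF.aestronglyMeasurable]
    rw [this, integral_prod _ hFi]
    refine integral_eq_zero_of_ae ?_
    filter_upwards [hmean] with v hv
    have := integral_prod_mul (μ := π) (ν := π) (fun y => Z (v, y)) (fun y => Z (v, y))
    simp only [this, hv]; simp
  have hK' : (0:ℝ) < K := by exact_mod_cast hK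
  have hexp : ∀ ω, ((∑ j ∈ Finset.range K, h (ξ ω) (η j ω)) / K - ∫ y, h (ξ ω) y ∂π) ^ 2 =
      (∑ a ∈ Finset.range K, ∑ b ∈ Finset.range K, Z (ξ ω, η a ω) * Z (ξ ω, η b ω)) /
        (K : ℝ) ^ 2 := by
    intro ω
    rw [← Finset.sum_mul_sum, ← sq, ← div_pow]
    congr 1
    simp only [hZ, Finset.sum_sub_distrib, Finset.sum_const, Finset.card_range, nsmul_eq_mul]
    field_simp
  simp_rw [hexp]
  have hS : Integrable (fun ω => ∑ a ∈ Finset.range K, ∑ b ∈ Finset.range K,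
      Z (ξ ω, η a ω) * Z (ξ ω, η b ω)) P :=
    integrable_finsetSum _ fun a _ => integrable_finsetSum _ fun b _ => h_pair a b
  refine ⟨hS.div_const _, ?_⟩
  rw [integral_div, integral_finsetSum _ fun a _ => integrable_finsetSum _ fun b _ => h_pair a b]
  simp_rw [integral_finsetSum _ fun b _ => h_pair _ b]
  have : ∑ a ∈ Finset.range K, ∑ b ∈ Finset.range K, ∫ ω, Z (ξ ω, η a ω) * Z (ξ ω, η b ω) ∂P ≤
      K * ∫ p, h p.1 p.2 ^ 2 ∂(ν.prod π) := by
    calc _ ≤ ∑ a ∈ Finset.range K, ∫ p, h p.1 p.2 ^ 2 ∂(ν.prod π) := by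
          refine Finset.sum_le_sum fun a ha => ?_
          rw [Finset.sum_eq_single_of_mem a ha fun b _ hb => hoff a b (Ne.symm hb)]
          exact hdiag a
      _ = _ := by simp
  rw [div_le_div_iff₀ (by positivity) hK']
  nlinarith

end lln

/-- The average of the `K` entries of row `i` in the columns `k, …, k + K - 1`. -/
def rowAvg (k K : ℕ) (B : ℕ → ℕ → ℕ) (i : ℕ) : ℝ :=
  (∑ j ∈ Finset.range K, (B i (k + j) : ℝ)) / K

lemma rowAvg_nonneg (k K : ℕ) (B : ℕ → ℕ → ℕ) (i : ℕ) : 0 ≤ rowAvg k K B i := by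
  unfold rowAvg; positivity

lemma measurable_queueProb {Ω : Type*} [MeasurableSpace Ω] {t : ℝ} {A : ℕ → ℕ → ℕ} {k : ℕ}
    {M : Ω → ℕ → ℕ → ℕ} (hM : ∀ i j, Measurable fun ω => M ω i j)
    {D : Ω → ℕ → ℝ} (hD : ∀ i, Measurable fun ω => D ω i) {a : Ω → ℝ} (ha : Measurable a) :
    Measurable fun ω => queueProb t A k (M ω) (D ω) (a ω) := by
  have key : ∀ e : ℕ × ℕ, Measurable fun ω =>
      entryQ t A e.1 e.2 (M ω e.1 e.2) (a ω * (D ω e.1 * D ω e.2)) := by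
    intro e
    have h1 : Measurable fun ω => (M ω e.1 e.2, a ω * (D ω e.1 * D ω e.2)) :=
      (hM e.1 e.2).prodMk (ha.mul ((hD e.1).mul (hD e.2)))
    have h2 := (measurable_entryQ t A e.1 e.2).comp h1
    simp only [Function.comp_def] at h2
    exact h2
  exact Finset.measurable_fun_prod (upperPairs k) fun e _ => key e

lemma measurable_rowAvg {Ω : Type*} [MeasurableSpace Ω] {k K : ℕ}
    {M : Ω → ℕ → ℕ → ℕ} (hM : ∀ i j, Measurable fun ω => M ω i j) (i : ℕ) :
    Measurable fun ω => rowAvg k K (M ω) i := by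
  unfold rowAvg
  have : ∀ j, Measurable fun ω => (M ω i (k + j) : ℝ) := fun j =>
    (measurable_of_countable (fun n : ℕ => (n : ℝ))).comp (hM i (k + j))
  fun_prop

/-- Bound for the replacement of conditional mean degrees by empirical row averages (over `L ^ 2`
fresh columns), and of the inverse density `a` by `b`. -/
def replErr (k : ℕ) (c a b L : ℝ) : ℝ :=
  (k : ℝ) ^ 2 * (|a - b| * (k * c) + b * (k * c / L + (L + 1) * (k * (c / L ^ 2))))

lemma integral_errBound {Ω : Type*} [MeasurableSpace Ω] {P : Measure Ω} {Q R : Ω → ℝ}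
    (hQ : Integrable Q P) (hR : Integrable R P) (x y b L : ℝ) :
    Integrable (fun ω => x * (y * Q ω + b * (Q ω / L + (L + 1) * R ω))) P ∧
    ∫ ω, x * (y * Q ω + b * (Q ω / L + (L + 1) * R ω)) ∂P =
      x * (y * ∫ ω, Q ω ∂P + b * ((∫ ω, Q ω ∂P) / L + (L + 1) * ∫ ω, R ω ∂P)) := by
  have h1 : Integrable (fun ω => Q ω / L + (L + 1) * R ω) P :=
    (hQ.div_const L).add (hR.const_mul (L + 1))
  refine ⟨((hQ.const_mul y).add (h1.const_mul b)).const_mul x, ?_⟩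
  rw [integral_const_mul, integral_add (hQ.const_mul y) (h1.const_mul b), integral_const_mul,
    integral_const_mul, integral_add (hQ.div_const L) (hR.const_mul (L + 1)), integral_div,
    integral_const_mul]

/-- Expected value of `queueProb_diff_le`, given second moment bounds on the degrees `D` and on
their estimation by row averages. -/
lemma integral_queueProb_diff_le {Ω : Type*} [MeasurableSpace Ω] {P : Measure Ω}
    [IsProbabilityMeasure P] {t : ℝ} (ht : 0 ≤ t) (A : ℕ → ℕ → ℕ) (k : ℕ)
    {M : Ω → ℕ → ℕ → ℕ} (hM : ∀ i j, Measurable fun ω => M ω i j)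
    {D : Ω → ℕ → ℝ} (hD : ∀ i, Measurable fun ω => D ω i) (hD0 : ∀ ω i, 0 ≤ D ω i) {c : ℝ}
    (hDi : ∀ i, Integrable (fun ω => D ω i ^ 2) P) (hDc : ∀ i, ∫ ω, D ω i ^ 2 ∂P ≤ c)
    {L : ℕ} (hL : 1 ≤ L)
    (hEi : ∀ i < k, Integrable (fun ω => (rowAvg k (L ^ 2) (M ω) i - D ω i) ^ 2) P)
    (hEc : ∀ i < k, ∫ ω, (rowAvg k (L ^ 2) (M ω) i - D ω i) ^ 2 ∂P ≤ c / (L : ℝ) ^ 2)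
    {a b : ℝ} (ha : 0 ≤ a) (hb : 0 ≤ b) :
    |∫ ω, queueProb t A k (M ω) (D ω) a ∂P -
      ∫ ω, queueProb t A k (M ω) (rowAvg k (L ^ 2) (M ω)) b ∂P| ≤ replErr k c a b L := by
  have hL' : (1:ℝ) ≤ L := by exact_mod_cast hL
  have bdd : ∀ (s : Ω → ℕ → ℝ) (a : ℝ), (∀ i, Measurable fun ω => s ω i) →
      (∀ ω i, 0 ≤ s ω i) → 0 ≤ a → Integrable (fun ω => queueProb t A k (M ω) (s ω) a) P := by
    intro s a hs hs0 ha
    refine Integrable.of_bound (measurable_queueProb hM hs measurable_const).aestronglyMeasurable 1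
      (ae_of_all _ fun ω => ?_)
    rw [Real.norm_of_nonneg (queueProb_nonneg ht A k _ (hs0 ω) ha)]
    exact queueProb_le_one ht A k _ (hs0 ω) ha
  have i1 := bdd D a hD hD0 ha
  have i2 := bdd (fun ω => rowAvg k (L ^ 2) (M ω)) b (measurable_rowAvg hM)
    (fun ω i => rowAvg_nonneg _ _ _ _) hb
  have iQ : Integrable (fun ω => ∑ i ∈ Finset.range k, D ω i ^ 2) P :=
    integrable_finsetSum _ fun i _ => hDi i
  have iR : Integrable (fun ω => ∑ i ∈ Finset.range k,
      (rowAvg k (L ^ 2) (M ω) i - D ω i) ^ 2) P :=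
    integrable_finsetSum _ fun i hi => hEi i (Finset.mem_range.1 hi)
  have hQ : ∫ ω, ∑ i ∈ Finset.range k, D ω i ^ 2 ∂P ≤ k * c := by
    rw [integral_finsetSum _ fun i _ => hDi i]
    refine (Finset.sum_le_card_nsmul _ _ c fun i _ => hDc i).trans ?_
    simp
  have hR : ∫ ω, ∑ i ∈ Finset.range k, (rowAvg k (L ^ 2) (M ω) i - D ω i) ^ 2 ∂P ≤
      k * (c / (L:ℝ) ^ 2) := by
    rw [integral_finsetSum _ fun i hi => hEi i (Finset.mem_range.1 hi)]
    refine (Finset.sum_le_card_nsmul _ _ _ fun i hi => hEc i (Finset.mem_range.1 hi)).trans ?_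
    simp
  rw [← integral_sub i1 i2]
  refine (abs_integral_le_integral_abs).trans ?_
  obtain ⟨iB, hB⟩ := integral_errBound iQ iR ((k:ℝ) ^ 2) |a - b| b (L:ℝ)
  refine (integral_mono (i1.sub i2).abs iB fun ω =>
    queueProb_diff_le ht A k (M ω) (hD0 ω) (rowAvg_nonneg k (L ^ 2) (M ω)) ha hb hL').trans ?_
  rw [hB]
  unfold replErr
  gcongr

/-! ### The `W`-random multigraph -/

/-- The uniform distribution on `[0,1]`. -/
def unitM : Measure ℝ := volume.restrict (Icc (0:ℝ) 1)

instance : IsProbabilityMeasure unitM := ⟨by simp [unitM]⟩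

lemma ae_unitM_mem : ∀ᵐ x ∂unitM, x ∈ Icc (0:ℝ) 1 := ae_restrict_mem measurableSet_Icc

/-- The generalised inverse of the distribution function of `W x y`: it turns a uniform variable
`u` into a variable with law `W x y`. For `u` outside `[0,1)` the value is irrelevant. -/
def quantile (W : ℝ → ℝ → ℕ → ℝ) (x y u : ℝ) : ℕ :=
  sInf {k | u < ∑ l ∈ Finset.range (k + 1), W x y l}

lemma quantile_eq_iff (W : ℝ → ℝ → ℕ → ℝ) (x y u : ℝ) (k : ℕ) :
    quantile W x y u = k ↔
      (u < ∑ l ∈ Finset.range (k + 1), W x y l ∧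
        ∀ j < k, ¬ u < ∑ l ∈ Finset.range (j + 1), W x y l) ∨
      (k = 0 ∧ ∀ j, ¬ u < ∑ l ∈ Finset.range (j + 1), W x y l) := by
  unfold quantile
  set S := {k | u < ∑ l ∈ Finset.range (k + 1), W x y l} with hS
  constructor
  · rintro rfl
    by_cases h : S.Nonempty
    · exact Or.inl ⟨Nat.sInf_mem h, fun j hj => Nat.notMem_of_lt_sInf hj⟩
    · rw [Set.not_nonempty_iff_eq_empty] at h
      refine Or.inr ⟨by rw [h]; simp, fun j hj => ?_⟩
      have : j ∈ S := hj
      rw [h] at this; exact this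
  · rintro (⟨h1, h2⟩ | ⟨rfl, h⟩)
    · refine le_antisymm (Nat.sInf_le h1) ?_
      by_contra hlt
      exact h2 _ (not_le.1 hlt) (Nat.sInf_mem (s := S) ⟨k, h1⟩)
    · have : S = ∅ := Set.eq_empty_of_forall_notMem h
      rw [this]; simp

section multigraphon
variable {W : ℝ → ℝ → ℕ → ℝ} (hW : IsMultigraphon W)
include hW

lemma measurable_W_apply (l : ℕ) : Measurable fun p : ℝ × ℝ => W p.1 p.2 l :=
  hW.1.comp (measurable_fst.prodMk (measurable_snd.prodMk measurable_const))

lemma measurable_quantile : Measurable fun p : ℝ × ℝ × ℝ => quantile W p.1 p.2.1 p.2.2 := by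
  have hs : ∀ k, MeasurableSet {p : ℝ × ℝ × ℝ |
      p.2.2 < ∑ l ∈ Finset.range (k + 1), W p.1 p.2.1 l} := by
    intro k
    refine measurableSet_lt (by fun_prop) (Finset.measurable_fun_sum _ fun l _ => ?_)
    exact (measurable_W_apply hW l).comp
      (measurable_fst.prodMk (measurable_fst.comp measurable_snd))
  refine measurable_to_countable' fun k => ?_
  have : (fun p : ℝ × ℝ × ℝ => quantile W p.1 p.2.1 p.2.2) ⁻¹' {k} =
      ({p : ℝ × ℝ × ℝ | p.2.2 < ∑ l ∈ Finset.range (k + 1), W p.1 p.2.1 l} ∩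
        ⋂ j, ⋂ (_ : j < k), {p : ℝ × ℝ × ℝ |
          p.2.2 < ∑ l ∈ Finset.range (j + 1), W p.1 p.2.1 l}ᶜ) ∪
      ({_p : ℝ × ℝ × ℝ | k = 0} ∩
        ⋂ j, {p : ℝ × ℝ × ℝ | p.2.2 < ∑ l ∈ Finset.range (j + 1), W p.1 p.2.1 l}ᶜ) := by
    ext p
    simp only [mem_preimage, mem_singleton_iff, quantile_eq_iff, mem_union, mem_inter_iff,
      mem_iInter, mem_compl_iff, mem_ofPred_eq]
  rw [this]
  exact ((hs k).inter (MeasurableSet.iInter fun j => MeasurableSet.iInter fun _ =>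
    (hs j).compl)).union ((MeasurableSet.const _).inter (MeasurableSet.iInter fun j => (hs j).compl))

lemma measurable_quantile_right (x y : ℝ) : Measurable (quantile W x y) :=
  (measurable_quantile hW).comp
    (measurable_const.prodMk (measurable_const.prodMk measurable_id))

lemma hasSum_W {x y : ℝ} (hx : x ∈ Icc (0:ℝ) 1) (hy : y ∈ Icc (0:ℝ) 1) :
    HasSum (W x y) 1 := by
  have h := hW.2.2.2.1 x hx y hy
  have hs : Summable (W x y) := by
    by_contra hn
    rw [tsum_eq_zero_of_not_summable hn] at h
    exact zero_ne_one h
  rw [← h]; exact hs.hasSum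

lemma map_quantile_singleton {x y : ℝ} (hx : x ∈ Icc (0:ℝ) 1) (hy : y ∈ Icc (0:ℝ) 1) (k : ℕ) :
    (unitM.map (quantile W x y)) {k} = ENNReal.ofReal (W x y k) := by
  have h0 : ∀ l, 0 ≤ W x y l := fun l => (hW.2.1 x y l).1
  have hsum := hasSum_W hW hx hy
  have hmono : Monotone fun n => ∑ l ∈ Finset.range n, W x y l := fun a b hab =>
    Finset.sum_le_sum_of_subset_of_nonneg (Finset.range_mono hab) fun l _ _ => h0 l
  have hle : ∀ n, ∑ l ∈ Finset.range n, W x y l ≤ 1 := fun n => sum_le_hasSum _ (fun l _ => h0 l) hsum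
  rw [Measure.map_apply (measurable_quantile_right hW x y) (measurableSet_singleton k), unitM]
  have hae : (quantile W x y ⁻¹' {k} : Set ℝ) =ᵐ[volume.restrict (Icc (0:ℝ) 1)]
      Ico (∑ l ∈ Finset.range k, W x y l) (∑ l ∈ Finset.range (k + 1), W x y l) := by
    have h1 : ∀ᵐ u ∂(volume.restrict (Icc (0:ℝ) 1)), u ≠ 1 := by
      refine ae_restrict_of_ae ?_
      simp [ae_iff]
    filter_upwards [ae_unitM_mem, h1] with u hu hu1
    have hu1 : u < 1 := lt_of_le_of_ne hu.2 hu1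
    obtain ⟨N, hN⟩ : ∃ N, u < ∑ l ∈ Finset.range N, W x y l :=
      (hsum.tendsto_sum_nat.eventually (lt_mem_nhds hu1)).exists
    have hno : ¬ ∀ j, ¬ u < ∑ l ∈ Finset.range (j + 1), W x y l := fun h =>
      h N (hN.trans_le (hmono (Nat.le_succ N)))
    apply propext
    change quantile W x y u = k ↔ _ ≤ u ∧ u < _
    rw [quantile_eq_iff]
    constructor
    · rintro (⟨a, b⟩ | ⟨_, b⟩)
      · refine ⟨?_, a⟩
        cases k with
        | zero => simpa using hu.1
        | succ k => exact not_lt.1 (b k (Nat.lt_succ_self k))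
      · exact absurd b hno
    · rintro ⟨a, b⟩
      exact Or.inl ⟨b, fun j hj => not_lt.2 ((hmono hj).trans a)⟩
  rw [measure_congr hae, Measure.restrict_apply measurableSet_Ico,
    Set.inter_eq_left.2, Real.volume_Ico, Finset.sum_range_succ]
  · congr 1; ring
  · intro u hu
    exact ⟨(Finset.sum_nonneg fun l _ => h0 l).trans hu.1, hu.2.le.trans (hle _)⟩

lemma lintegral_quantile {x y : ℝ} (hx : x ∈ Icc (0:ℝ) 1) (hy : y ∈ Icc (0:ℝ) 1) (g : ℕ → ℝ≥0∞) :
    ∫⁻ u, g (quantile W x y u) ∂unitM = ∑' k, g k * ENNReal.ofReal (W x y k) := by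
  rw [← lintegral_map (f := g) (measurable_of_countable g) (measurable_quantile_right hW x y),
    lintegral_countable']
  simp_rw [map_quantile_singleton hW hx hy]

lemma integral_quantile {x y : ℝ} (hx : x ∈ Icc (0:ℝ) 1) (hy : y ∈ Icc (0:ℝ) 1) (g : ℕ → ℝ)
    (hg : ∀ h, |g h| ≤ 1) :
    ∫ u, g (quantile W x y u) ∂unitM = ∑' k, W x y k * g k := by
  rw [← integral_map (f := g) (measurable_quantile_right hW x y).aemeasurable
    (measurable_of_countable g).aestronglyMeasurable, integral_countable]
  · refine tsum_congr fun k => ?_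
    rw [measureReal_def, map_quantile_singleton hW hx hy,
      ENNReal.toReal_ofReal (hW.2.1 x y k).1, smul_eq_mul]
  · have := Measure.isProbabilityMeasure_map (μ := unitM)
      (measurable_quantile_right hW x y).aemeasurable
    exact Integrable.of_bound (measurable_of_countable g).aestronglyMeasurable 1 (ae_of_all _ hg)

end multigraphon

/-- The joint law of the independent uniform variables driving the `W`-random multigraph: the
vertex types sit in the left summand, the variables realising the entries in the right one. -/
def sampleP : Measure (ℕ ⊕ ℕ × ℕ → ℝ) := Measure.infinitePi fun _ => unitM

instance : IsProbabilityMeasure sampleP := by unfold sampleP; infer_instance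

/-- The infinite `W`-random multigraph: the entry `(i,j)` is sampled from `W` at the types of the
two vertices, the smaller index first, which makes the matrix symmetric. -/
def sampleM (W : ℝ → ℝ → ℕ → ℝ) (ω : ℕ ⊕ ℕ × ℕ → ℝ) (i j : ℕ) : ℕ :=
  quantile W (ω (.inl (min i j))) (ω (.inl (max i j))) (ω (.inr (min i j, max i j)))

lemma sampleM_of_le (W : ℝ → ℝ → ℕ → ℝ) (ω : ℕ ⊕ ℕ × ℕ → ℝ) {i j : ℕ} (h : i ≤ j) :
    sampleM W ω i j = quantile W (ω (.inl i)) (ω (.inl j)) (ω (.inr (i, j))) := by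
  simp [sampleM, h]

lemma measurable_sampleM {W : ℝ → ℝ → ℕ → ℝ} (hW : IsMultigraphon W) (i j : ℕ) :
    Measurable fun ω => sampleM W ω i j := by
  have h1 : Measurable fun ω : ℕ ⊕ ℕ × ℕ → ℝ => (ω (.inl (min i j)), ω (.inl (max i j)),
      ω (.inr (min i j, max i j))) := by fun_prop
  have h2 := (measurable_quantile hW).comp h1
  simp only [Function.comp_def] at h2
  exact h2

lemma prod_upperPairs (k : ℕ) (F : ℕ → ℕ → ℝ) :
    ∏ e ∈ upperPairs k, F e.1 e.2 =
      ∏ i : Fin k, ∏ j ∈ Finset.univ.filter (fun j : Fin k => i ≤ j), F i j := by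
  rw [upperPairs, Finset.prod_filter, Finset.prod_product, Finset.prod_range]
  refine Finset.prod_congr rfl fun i _ => ?_
  rw [Finset.prod_range, Finset.prod_filter]
  rfl

/-- Only finitely many driving variables matter for the first `k` vertices, and they are again
independent and uniform. -/
lemma measurePreserving_sample (k : ℕ) :
    MeasurePreserving (fun ω : ℕ ⊕ ℕ × ℕ → ℝ =>
      ((fun i : Fin k => ω (.inl i)), fun e : Fin k × Fin k => ω (.inr (e.1, e.2))))
      sampleP ((Measure.pi fun _ : Fin k => unitM).prod
        (Measure.pi fun _ : Fin k × Fin k => unitM)) := by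
  let f : Fin k ⊕ Fin k × Fin k → ℕ ⊕ ℕ × ℕ :=
    Sum.map (fun i => (i : ℕ)) fun e => ((e.1 : ℕ), (e.2 : ℕ))
  have hf : Function.Injective f := by
    refine Function.Injective.sumMap Fin.val_injective ?_
    rintro ⟨a, b⟩ ⟨c, d⟩ h
    simpa [Fin.ext_iff] using h
  have h1 : MeasurePreserving (fun (ω : ℕ ⊕ ℕ × ℕ → ℝ) i => ω (f i)) sampleP
      (Measure.pi fun _ : Fin k ⊕ Fin k × Fin k => unitM) := by
    refine ⟨by fun_prop, ?_⟩
    rw [sampleP, Measure.map_infinitePi_infinitePi_of_inj hf, Measure.infinitePi_eq_pi]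
  exact (measurePreserving_sumPiEquivProdPi (X := fun _ : Fin k ⊕ Fin k × Fin k => ℝ)
    (fun _ => unitM)).comp h1

lemma pi_unitM (k : ℕ) : (Measure.pi fun _ : Fin k => unitM) =
    (volume : Measure (Fin k → ℝ)).restrict (Set.univ.pi fun _ => Icc (0:ℝ) 1) := by
  rw [volume_pi, Measure.restrict_pi_pi]; rfl

/-- Conditionally on the vertex types the entries on and above the diagonal are independent with
the laws `W x y`. -/
lemma integral_sample {W : ℝ → ℝ → ℕ → ℝ} (hW : IsMultigraphon W) (k : ℕ)
    (g : ℕ → ℕ → ℝ → ℝ → ℕ → ℝ)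
    (hg : ∀ i j, Measurable fun p : ℝ × ℝ × ℕ => g i j p.1 p.2.1 p.2.2)
    (hg1 : ∀ i j x y h, |g i j x y h| ≤ 1) :
    ∫ ω, ∏ e ∈ upperPairs k, g e.1 e.2 (ω (.inl e.1)) (ω (.inl e.2)) (sampleM W ω e.1 e.2)
        ∂sampleP =
      ∫ x : Fin k → ℝ in Set.univ.pi (fun _ : Fin k => Icc (0:ℝ) 1),
        ∏ i : Fin k, ∏ j ∈ Finset.univ.filter (fun j : Fin k => i ≤ j),
          ∑' h, W (x i) (x j) h * g i j (x i) (x j) h := by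
  rw [← pi_unitM]
  set G : (Fin k → ℝ) × (Fin k × Fin k → ℝ) → ℝ := fun p =>
    ∏ e : Fin k × Fin k, if e.1 ≤ e.2 then
      g e.1 e.2 (p.1 e.1) (p.1 e.2) (quantile W (p.1 e.1) (p.1 e.2) (p.2 e)) else 1 with hG
  have hGm : Measurable G := by
    refine Finset.measurable_fun_prod _ fun e _ => ?_
    by_cases he : e.1 ≤ e.2
    · simp only [he, if_true]
      have h1 : Measurable fun p : (Fin k → ℝ) × (Fin k × Fin k → ℝ) =>
          (p.1 e.1, p.1 e.2, p.2 e) := by fun_prop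
      have h2 := (measurable_quantile hW).comp h1
      simp only [Function.comp_def] at h2
      have h3 : Measurable fun p : (Fin k → ℝ) × (Fin k × Fin k → ℝ) =>
          (p.1 e.1, p.1 e.2, quantile W (p.1 e.1) (p.1 e.2) (p.2 e)) := by fun_prop
      have h4 := (hg e.1 e.2).comp h3
      simp only [Function.comp_def] at h4
      exact h4
    · simp only [he, if_false]; exact measurable_const
  have hGb : ∀ p, ‖G p‖ ≤ 1 := by
    intro p
    rw [hG, Real.norm_eq_abs, Finset.abs_prod]
    refine Finset.prod_le_one (fun e _ => abs_nonneg _) fun e _ => ?_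
    split_ifs
    · exact hg1 _ _ _ _ _
    · simp
  have e1 : ∀ ω : ℕ ⊕ ℕ × ℕ → ℝ,
      ∏ e ∈ upperPairs k, g e.1 e.2 (ω (.inl e.1)) (ω (.inl e.2)) (sampleM W ω e.1 e.2) =
      G ((fun i : Fin k => ω (.inl i)), fun e : Fin k × Fin k => ω (.inr (e.1, e.2))) := by
    intro ω
    rw [prod_upperPairs k fun i j => g i j (ω (.inl i)) (ω (.inl j)) (sampleM W ω i j), hG]
    simp only
    rw [Fintype.prod_prod_type]
    refine Finset.prod_congr rfl fun i _ => ?_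
    rw [Finset.prod_filter]
    refine Finset.prod_congr rfl fun j _ => ?_
    refine if_ctx_congr Iff.rfl (fun hij => ?_) fun _ => rfl
    rw [sampleM_of_le W ω (by exact_mod_cast hij)]
  simp_rw [e1]
  have hmp := measurePreserving_sample k
  rw [← integral_map (f := G) hmp.measurable.aemeasurable hGm.aestronglyMeasurable, hmp.map_eq,
    integral_prod _ (Integrable.of_bound hGm.aestronglyMeasurable 1 (ae_of_all _ hGb))]
  have hae : ∀ᵐ x ∂(Measure.pi fun _ : Fin k => unitM), ∀ i, x i ∈ Icc (0:ℝ) 1 := by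
    rw [pi_unitM]
    filter_upwards [ae_restrict_mem (MeasurableSet.univ_pi fun _ => measurableSet_Icc)] with x hx i
    exact hx i (mem_univ i)
  refine integral_congr_ae ?_
  filter_upwards [hae] with x hx
  simp only [hG]
  rw [integral_fintype_prod_eq_prod (f := fun (e : Fin k × Fin k) (u : ℝ) => if e.1 ≤ e.2 then
      g e.1 e.2 (x e.1) (x e.2) (quantile W (x e.1) (x e.2) u) else 1), Fintype.prod_prod_type]
  refine Finset.prod_congr rfl fun i _ => ?_
  rw [Finset.prod_filter]
  refine Finset.prod_congr rfl fun j _ => ?_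
  split_ifs with hij
  · exact integral_quantile hW (hx i) (hx j) _ (hg1 _ _ _ _)
  · simp

/-! ### Replacing degrees by row averages, independent coordinates, and Scheffé convergence -/

/-- Combination of the Lipschitz bound with the conditional law of large numbers: if every row
entry `M i (k + j)` is a function of `ξ i` and of a fresh variable `η i j`, the rescaled degrees
`∫ h (ξ i) y dπ` may be replaced by averages of `L ^ 2` entries of the matrix. -/
lemma sampling_bound {V Y : Type*} [MeasurableSpace V] [MeasurableSpace Y] {ν : Measure V}
    {π : Measure Y} [IsProbabilityMeasure ν] [IsProbabilityMeasure π] {h : V → Y → ℝ}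
    {Ω : Type*} [MeasurableSpace Ω] {P : Measure Ω} [IsProbabilityMeasure P]
    (hm : Measurable (Function.uncurry h)) (h0 : ∀ v y, 0 ≤ h v y)
    (h2 : Integrable (fun p : V × Y => h p.1 p.2 ^ 2) (ν.prod π)) {c : ℝ}
    (hc : ∫ p, h p.1 p.2 ^ 2 ∂(ν.prod π) ≤ c)
    {ξ : ℕ → Ω → V} (hξ : ∀ i, MeasurePreserving (ξ i) P ν) {η : ℕ → ℕ → Ω → Y} {k : ℕ}
    (htri : ∀ i < k, ∀ a b, a ≠ b →
      MeasurePreserving (fun ω => (ξ i ω, (η i a ω, η i b ω))) P (ν.prod (π.prod π)))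
    {M : Ω → ℕ → ℕ → ℕ} (hM : ∀ i j, Measurable fun ω => M ω i j)
    (hMη : ∀ i < k, ∀ j ω, (M ω i (k + j) : ℝ) = h (ξ i ω) (η i j ω))
    {t : ℝ} (ht : 0 ≤ t) (A : ℕ → ℕ → ℕ) {L : ℕ} (hL : 1 ≤ L)
    {a b : ℝ} (ha : 0 ≤ a) (hb : 0 ≤ b) :
    |∫ ω, queueProb t A k (M ω) (fun i => ∫ y, h (ξ i ω) y ∂π) a ∂P -
      ∫ ω, queueProb t A k (M ω) (rowAvg k (L ^ 2) (M ω)) b ∂P| ≤ replErr k c a b L := by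
  have hD := measurable_condMean (π := π) hm
  obtain ⟨hs1, hs2⟩ := condMean_sq hm h2
  have hL0 : 0 < L ^ 2 := by positivity
  have hll : ∀ i < k, _ := fun i hi => lln_sq hm h2 (htri i hi) (L ^ 2) hL0
  have hrow : ∀ i < k, ∀ ω, rowAvg k (L ^ 2) (M ω) i =
      (∑ j ∈ Finset.range (L ^ 2), h (ξ i ω) (η i j ω)) / ((L ^ 2 : ℕ) : ℝ) := by
    intro i hi ω
    unfold rowAvg
    simp_rw [hMη i hi]
  refine integral_queueProb_diff_le ht A k hM (D := fun ω i => ∫ y, h (ξ i ω) y ∂π) ?_ ?_ ?_ ?_ hL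
    ?_ ?_ ha hb
  · exact fun i => hD.comp (hξ i).measurable
  · exact fun ω i => integral_nonneg fun y => h0 _ _
  · exact fun i => (hξ i).integrable_comp_of_integrable hs1
  · intro i
    refine le_trans (le_of_eq ?_) (hs2.trans hc)
    rw [← (hξ i).map_eq, integral_map (hξ i).measurable.aemeasurable
      (hD.pow_const 2).aestronglyMeasurable]
  · intro i hi
    simp_rw [hrow i hi]
    exact (hll i hi).1
  · intro i hi
    simp_rw [hrow i hi]
    refine (hll i hi).2.trans ?_
    push_cast
    gcongr

section indep
variable {ι α : Type*} [MeasurableSpace α] {θ : Measure α} [IsProbabilityMeasure θ]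

lemma iIndepFun_eval : iIndepFun (fun i (ω : ι → α) => ω i) (Measure.infinitePi fun _ => θ) :=
  iIndepFun_infinitePi (P := fun _ : ι => θ) (X := fun _ x => x) fun _ => measurable_id

lemma measurePreserving_eval' (i : ι) :
    MeasurePreserving (fun ω : ι → α => ω i) (Measure.infinitePi fun _ => θ) θ :=
  measurePreserving_eval_infinitePi (fun _ : ι => θ) i

lemma measurePreserving_two {i j : ι} (h : i ≠ j) :
    MeasurePreserving (fun ω : ι → α => (ω i, ω j)) (Measure.infinitePi fun _ => θ)
      (θ.prod θ) := by
  refine ⟨by fun_prop, ?_⟩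
  rw [(indepFun_iff_map_prod_eq_prod_map_map (measurable_pi_apply i).aemeasurable
    (measurable_pi_apply j).aemeasurable).1 (iIndepFun_eval.indepFun h), (measurePreserving_eval' i).map_eq,
    (measurePreserving_eval' j).map_eq]

lemma measurePreserving_three {i a b : ι} (h1 : i ≠ a) (h2 : i ≠ b) (h3 : a ≠ b) :
    MeasurePreserving (fun ω : ι → α => (ω i, (ω a, ω b))) (Measure.infinitePi fun _ => θ)
      (θ.prod (θ.prod θ)) := by
  refine ⟨by fun_prop, ?_⟩
  have hi := iIndepFun_eval (ι := ι) (θ := θ)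
  have hI := (hi.indepFun_prodMk (fun i => by fun_prop) a b i h1.symm h2.symm).symm
  rw [(indepFun_iff_map_prod_eq_prod_map_map (measurable_pi_apply i).aemeasurable
    (by fun_prop)).1 hI,
    (measurePreserving_eval' i).map_eq, (measurePreserving_two h3).map_eq]

lemma measurePreserving_five {i a b a' b' : ι} (h1 : i ∉ ({a, b, a', b'} : Finset ι))
    (h2 : a ≠ b) (h3 : a' ≠ b') (h4 : a ≠ a') (h5 : a ≠ b') (h6 : b ≠ a') (h7 : b ≠ b') :
    MeasurePreserving (fun ω : ι → α => (ω i, ((ω a, ω b), (ω a', ω b'))))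
      (Measure.infinitePi fun _ => θ) (θ.prod ((θ.prod θ).prod (θ.prod θ))) := by
  refine ⟨by fun_prop, ?_⟩
  have hi := iIndepFun_eval (ι := ι) (θ := θ)
  have hI := hi.indepFun_finset {i} {a, b, a', b'} (Finset.disjoint_singleton_left.2 h1)
    (fun i => by fun_prop)
  have hI2 : IndepFun (fun ω : ι → α => ω i) (fun ω => ((ω a, ω b), (ω a', ω b')))
      (Measure.infinitePi fun _ => θ) := by
    have m1 : Measurable fun f : ({i} : Finset ι) → α => f ⟨i, by simp⟩ := by fun_prop
    have m2 : Measurable fun f : ({a, b, a', b'} : Finset ι) → α =>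
        ((f ⟨a, by simp⟩, f ⟨b, by simp⟩), (f ⟨a', by simp⟩, f ⟨b', by simp⟩)) := by fun_prop
    exact hI.comp m1 m2
  have hI3 := hi.indepFun_prodMk_prodMk (fun i => by fun_prop) a b a' b' h4 h5 h6 h7
  rw [(indepFun_iff_map_prod_eq_prod_map_map (measurable_pi_apply i).aemeasurable
    (by fun_prop)).1 hI2,
    (measurePreserving_eval' i).map_eq,
    (indepFun_iff_map_prod_eq_prod_map_map (by fun_prop) (by fun_prop)).1 hI3,
    (measurePreserving_two h2).map_eq, (measurePreserving_two h3).map_eq]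

end indep

/-- Scheffé's lemma on a countable space: pointwise convergence of probability mass functions
implies convergence of the expectations of bounded functions. -/
lemma tendsto_tsum_of_scheffe {T : Type*} {p : ℕ → T → ℝ} {q : T → ℝ}
    (hp0 : ∀ n b, 0 ≤ p n b) (hp1 : ∀ n, HasSum (p n) 1) (hq0 : ∀ b, 0 ≤ q b) (hq1 : HasSum q 1)
    (h : ∀ b, Tendsto (fun n => p n b) atTop (𝓝 (q b))) {G : T → ℝ} {R : ℝ}
    (hG : ∀ b, |G b| ≤ R) :
    Tendsto (fun n => ∑' b, p n b * G b) atTop (𝓝 (∑' b, q b * G b)) := by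
  have hmin : Tendsto (fun n => ∑' b, min (p n b) (q b)) atTop (𝓝 1) := by
    rw [← hq1.tsum_eq]
    refine tendsto_tsum_of_dominated_convergence hq1.summable (fun b => ?_) (.of_forall fun n b => ?_)
    · have := (h b).min (tendsto_const_nhds (x := q b))
      simpa using this
    · rw [Real.norm_of_nonneg (le_min (hp0 _ _) (hq0 _))]
      exact min_le_right _ _
  have hms : ∀ n, Summable fun b => min (p n b) (q b) := fun n =>
    Summable.of_nonneg_of_le (fun b => le_min (hp0 _ _) (hq0 _)) (fun b => min_le_right _ _)
      hq1.summable
  have hd : ∀ n, HasSum (fun b => |p n b - q b|) (1 + 1 - 2 * ∑' b, min (p n b) (q b)) := by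
    intro n
    have e : (fun b => |p n b - q b|) = fun b => p n b + q b - 2 * min (p n b) (q b) := by
      funext b
      rcases le_total (p n b) (q b) with hle | hle
      · rw [min_eq_left hle, abs_of_nonpos (by linarith)]; ring
      · rw [min_eq_right hle, abs_of_nonneg (by linarith)]; ring
    rw [e]
    exact ((hp1 n).add hq1).sub ((hms n).hasSum.mul_left 2)
  have hpG : ∀ {r : T → ℝ}, (∀ b, 0 ≤ r b) → Summable r → Summable fun b => r b * G b := by
    intro r hr0 hr
    refine Summable.of_norm_bounded (hr.mul_right R) fun b => ?_
    rw [norm_mul, Real.norm_of_nonneg (hr0 b)]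
    exact mul_le_mul_of_nonneg_left (hG b) (hr0 b)
  rw [tendsto_iff_norm_sub_tendsto_zero]
  have hlim : Tendsto (fun n => (1 + 1 - 2 * ∑' b, min (p n b) (q b)) * R) atTop (𝓝 0) := by
    have := ((hmin.const_mul 2).const_sub (1 + 1)).mul_const R
    simpa [show (1:ℝ) + 1 - 2 = 0 by norm_num] using this
  refine squeeze_zero (fun n => norm_nonneg _) (fun n => ?_) hlim
  rw [← (hpG (hp0 n) (hp1 n).summable).tsum_sub (hpG hq0 hq1.summable), ← (hd n).tsum_eq,
    ← tsum_mul_right]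
  refine tsum_of_norm_bounded ((hd n).summable.mul_right R).hasSum fun b => ?_
  rw [← sub_mul, norm_mul]
  exact mul_le_mul_of_nonneg_left (hG b) (norm_nonneg _)

/-! ### Laws of leading blocks -/

instance countable_isAdjOn (N : ℕ) : Countable {B : ℕ → ℕ → ℕ // IsAdjOn N B} := by
  refine Function.Injective.countable (β := Fin N → Fin N → ℕ)
    (f := fun B i j => B.1 i j) fun B B' h => ?_
  ext i j
  by_cases hij : i < N ∧ j < N
  · exact congrFun (congrFun h ⟨i, hij.1⟩) ⟨j, hij.2⟩
  · have hij : N ≤ i ∨ N ≤ j := by omega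
    rw [B.2.2.2 i j hij, B'.2.2.2 i j hij]

section weakconv
variable {Ω : Type*} [MeasurableSpace Ω] {P : Measure Ω} [IsProbabilityMeasure P]
  {M : Ω → ℕ → ℕ → ℕ} (hM : ∀ i j, Measurable fun ω => M ω i j) (N : ℕ)
include hM

lemma measurableSet_subMat_eq (B : ℕ → ℕ → ℕ) : MeasurableSet {ω | subMat N (M ω) = B} := by
  have : {ω | subMat N (M ω) = B} = ⋂ i, ⋂ j, {ω | subMat N (M ω) i j = B i j} := by
    ext ω
    simp only [Set.mem_iInter, Set.mem_ofPred_eq, funext_iff]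
  rw [this]
  refine MeasurableSet.iInter fun i => MeasurableSet.iInter fun j => ?_
  have h1 : Measurable fun ω => subMat N (M ω) i j := by
    unfold subMat
    split_ifs
    · exact hM i j
    · exact measurable_const
  exact h1 (measurableSet_singleton (B i j))

/-- Expectations of functions of the leading `N × N` block as sums over the countably many
adjacency matrices. -/
lemma subMat_law (hadj : ∀ᵐ ω ∂P, IsAdjOn N (subMat N (M ω))) :
    HasSum (fun B : {B // IsAdjOn N B} => P.real {ω | subMat N (M ω) = B.1}) 1 ∧
    ∀ (G : (ℕ → ℕ → ℕ) → ℝ) (R : ℝ), (∀ B, |G B| ≤ R) →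
      ∫ ω, G (subMat N (M ω)) ∂P =
        ∑' B : {B // IsAdjOn N B}, P.real {ω | subMat N (M ω) = B.1} * G B.1 := by
  let _ : MeasurableSpace {B // IsAdjOn N B} := ⊤
  have h0 : IsAdjOn N (fun _ _ => 0) := ⟨by simp, by simp, by simp⟩
  let f : Ω → {B // IsAdjOn N B} := fun ω =>
    if h : IsAdjOn N (subMat N (M ω)) then ⟨subMat N (M ω), h⟩ else ⟨_, h0⟩
  have hf1 : ∀ᵐ ω ∂P, (f ω).1 = subMat N (M ω) := by
    filter_upwards [hadj] with ω hω
    simp only [f, dif_pos hω]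
  have hcompl : MeasurableSet {ω | ¬ IsAdjOn N (subMat N (M ω))} := by
    have : {ω | ¬ IsAdjOn N (subMat N (M ω))} =
        (⋃ B : {B // IsAdjOn N B}, {ω | subMat N (M ω) = B.1})ᶜ := by
      ext ω
      simp only [Set.mem_ofPred_eq, Set.mem_compl_iff, Set.mem_iUnion, Subtype.exists, not_exists]
      constructor
      · rintro h B hB rfl; exact h hB
      · intro h h'; exact h _ h' rfl
    rw [this]
    exact (MeasurableSet.iUnion fun B : {B // IsAdjOn N B} =>
      measurableSet_subMat_eq hM N B.1).compl
  have hf : Measurable f := by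
    refine measurable_to_countable' fun B => ?_
    have : f ⁻¹' {B} = {ω | subMat N (M ω) = B.1} ∪
        ({ω | ¬ IsAdjOn N (subMat N (M ω))} ∩ {_ω | B = ⟨_, h0⟩}) := by
      ext ω
      simp only [Set.mem_preimage, Set.mem_singleton_iff, Set.mem_union, Set.mem_inter_iff,
        Set.mem_ofPred_eq, f]
      constructor
      · intro h
        split_ifs at h with h1
        · left; rw [← h]
        · right; exact ⟨h1, h.symm⟩
      · rintro (h | ⟨h1, h2⟩)
        · have h1 : IsAdjOn N (subMat N (M ω)) := h ▸ B.2
          rw [dif_pos h1]; exact Subtype.ext h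
        · rw [dif_neg h1, h2]
    rw [this]
    exact (measurableSet_subMat_eq hM N _).union (hcompl.inter (MeasurableSet.const _))
  have hprob := Measure.isProbabilityMeasure_map (μ := P) hf.aemeasurable
  have hsing : ∀ B : {B // IsAdjOn N B},
      (P.map f) {B} = P {ω | subMat N (M ω) = B.1} := by
    intro B
    rw [Measure.map_apply hf (measurableSet_singleton B)]
    refine measure_congr ?_
    filter_upwards [hf1] with ω hω
    apply propext
    change f ω = B ↔ subMat N (M ω) = B.1
    rw [← hω, Subtype.ext_iff]
  refine ⟨?_, fun G R hG => ?_⟩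
  · have h1 : ∑' B : {B // IsAdjOn N B}, P {ω | subMat N (M ω) = B.1} = 1 := by
      simp_rw [← hsing]
      have := lintegral_countable' (μ := P.map f) (fun _ => (1 : ℝ≥0∞))
      simp only [lintegral_const, measure_univ, one_mul] at this
      exact this.symm
    have h2 := ENNReal.hasSum_toReal (f := fun B : {B // IsAdjOn N B} =>
      P {ω | subMat N (M ω) = B.1}) (by rw [h1]; simp)
    rw [← ENNReal.tsum_toReal_eq fun B => measure_ne_top _ _, h1, ENNReal.toReal_one] at h2
    exact h2
  · have h1 : ∫ ω, G (subMat N (M ω)) ∂P = ∫ B, G B.1 ∂(P.map f) := by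
      rw [integral_map hf.aemeasurable (measurable_of_countable _).aestronglyMeasurable]
      refine integral_congr_ae ?_
      filter_upwards [hf1] with ω hω
      rw [hω]
    rw [h1, integral_countable]
    · simp_rw [measureReal_def, hsing, smul_eq_mul]
    · exact Integrable.of_bound (measurable_of_countable _).aestronglyMeasurable R
        (ae_of_all _ fun B => hG B.1)

end weakconv

/-- Convergence of the laws of the leading blocks from convergence of the point probabilities. -/
lemma tendsto_integral_subMat {Ω : ℕ → Type*} [∀ n, MeasurableSpace (Ω n)]
    {P : ∀ n, Measure (Ω n)} [∀ n, IsProbabilityMeasure (P n)] {M : ∀ n, Ω n → ℕ → ℕ → ℕ}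
    (hM : ∀ n i j, Measurable fun ω => M n ω i j) {Ω' : Type*} [MeasurableSpace Ω']
    {P' : Measure Ω'} [IsProbabilityMeasure P'] {M' : Ω' → ℕ → ℕ → ℕ}
    (hM' : ∀ i j, Measurable fun ω => M' ω i j) (N : ℕ)
    (ha : ∀ n, ∀ᵐ ω ∂(P n), IsAdjOn N (subMat N (M n ω)))
    (ha' : ∀ᵐ ω ∂P', IsAdjOn N (subMat N (M' ω)))
    (h : ∀ B, IsAdjOn N B → Tendsto (fun n => (P n).real {ω | subMat N (M n ω) = B}) atTop
      (𝓝 (P'.real {ω | subMat N (M' ω) = B})))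
    {G : (ℕ → ℕ → ℕ) → ℝ} {R : ℝ} (hG : ∀ B, |G B| ≤ R) :
    Tendsto (fun n => ∫ ω, G (subMat N (M n ω)) ∂(P n)) atTop
      (𝓝 (∫ ω, G (subMat N (M' ω)) ∂P')) := by
  have h1 := fun n => subMat_law (hM n) N (ha n)
  have h2 := subMat_law hM' N ha'
  rw [h2.2 G R hG]
  simp_rw [fun n => (h1 n).2 G R hG]
  exact tendsto_tsum_of_scheffe (fun n b => measureReal_nonneg) (fun n => (h1 n).1)
    (fun b => measureReal_nonneg) h2.1 (fun b => h b.1 b.2) (fun b => hG b.1)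

/-! ### Induced densities as point probabilities of the `W`-random multigraph -/

lemma sampleM_symm (W : ℝ → ℝ → ℕ → ℝ) (ω : ℕ ⊕ ℕ × ℕ → ℝ) (i j : ℕ) :
    sampleM W ω i j = sampleM W ω j i := by
  simp only [sampleM, min_comm i j, max_comm i j]

lemma ae_even_quantile {W : ℝ → ℝ → ℕ → ℝ} (hW : IsMultigraphon W) :
    ∀ᵐ p ∂(unitM.prod unitM), 2 ∣ quantile W p.1 p.1 p.2 := by
  have h1 : Measurable fun p : ℝ × ℝ => (p.1, p.1, p.2) := by fun_prop
  have h2 := (measurable_quantile hW).comp h1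
  simp only [Function.comp_def] at h2
  have hms : MeasurableSet {p : ℝ × ℝ | 2 ∣ quantile W p.1 p.1 p.2} :=
    h2 (MeasurableSet.of_discrete (s := {n : ℕ | 2 ∣ n}))
  refine (Measure.ae_prod_iff_ae_ae hms).2 ?_
  filter_upwards [ae_unitM_mem] with x hx
  have h3 := lintegral_quantile hW hx hx fun n => if 2 ∣ n then 0 else 1
  have h4 : ∑' k, (if 2 ∣ k then 0 else 1) * ENNReal.ofReal (W x x k) = 0 := by
    refine ENNReal.tsum_eq_zero.2 fun k => ?_
    split_ifs with hk
    · simp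
    · obtain ⟨l, rfl⟩ : ∃ l, k = 2 * l + 1 := ⟨k / 2, by omega⟩
      simp [hW.2.2.2.2 x l]
  have h5 : Measurable fun u => if 2 ∣ quantile W x x u then (0 : ℝ≥0∞) else 1 :=
    (measurable_of_countable fun n : ℕ => if 2 ∣ n then (0 : ℝ≥0∞) else 1).comp
      (measurable_quantile_right hW x x)
  rw [h4, lintegral_eq_zero_iff h5] at h3
  filter_upwards [h3] with u hu
  by_contra hn
  simp [hn] at hu

lemma ae_isAdjOn_sampleM {W : ℝ → ℝ → ℕ → ℝ} (hW : IsMultigraphon W) (N : ℕ) :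
    ∀ᵐ ω ∂sampleP, IsAdjOn N (subMat N (sampleM W ω)) := by
  have h1 : ∀ i : ℕ, ∀ᵐ ω ∂sampleP, 2 ∣ sampleM W ω i i := by
    intro i
    have hp := measurePreserving_two (θ := unitM) (i := (Sum.inl i : ℕ ⊕ ℕ × ℕ))
      (j := Sum.inr (i, i)) (by simp)
    filter_upwards [hp.quasiMeasurePreserving.ae (ae_even_quantile hW)] with ω hω
    rw [sampleM_of_le W ω le_rfl]
    exact hω
  filter_upwards [ae_all_iff.2 h1] with ω hω
  refine ⟨fun i j => ?_, fun i => ?_, fun i j hij => ?_⟩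
  · simp only [subMat, sampleM_symm W ω i j, and_comm]
  · unfold subMat
    split_ifs
    · exact hω i
    · simp
  · unfold subMat
    rw [if_neg (by omega)]

/-- Membership in a point of the space of symmetric blocks, tested on and above the diagonal. -/
lemma prod_indicator_subMat {N : ℕ} {B M : ℕ → ℕ → ℕ} (hB : IsAdjOn N B)
    (hM : ∀ i j, M i j = M j i) :
    ∏ e ∈ upperPairs N, (if M e.1 e.2 = B e.1 e.2 then (1:ℝ) else 0) =
      if subMat N M = B then 1 else 0 := by
  have key : subMat N M = B ↔ ∀ e ∈ upperPairs N, M e.1 e.2 = B e.1 e.2 := by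
    simp only [upperPairs, Finset.mem_filter, Finset.mem_product, Finset.mem_range, Prod.forall]
    constructor
    · rintro rfl a b ⟨⟨h1, h2⟩, -⟩
      simp [subMat, h1, h2]
    · intro h
      funext i j
      unfold subMat
      split_ifs with hij
      · rcases le_total i j with hle | hle
        · exact h i j ⟨hij, hle⟩
        · rw [hM, hB.1]; exact h j i ⟨hij.symm, hle⟩
      · exact (hB.2.2 i j (by omega)).symm
  split_ifs with h
  · exact Finset.prod_eq_one fun e he => if_pos (key.1 h e he)
  · rw [key] at h
    push Not at h
    obtain ⟨e, he, hne⟩ := h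
    exact Finset.prod_eq_zero he (if_neg hne)

/-- Point probabilities of the `W`-random multigraph are the induced densities of `W`. -/
lemma sampleP_real_subMat {W : ℝ → ℝ → ℕ → ℝ} (hW : IsMultigraphon W) {N : ℕ} {B : ℕ → ℕ → ℕ}
    (hB : IsAdjOn N B) : sampleP.real {ω | subMat N (sampleM W ω) = B} = tEqW N B W := by
  have h := integral_sample hW N (fun i j _ _ h => if h = B i j then 1 else 0)
    (fun i j => (measurable_of_countable fun h : ℕ => if h = B i j then (1:ℝ) else 0).comp
      (measurable_snd.comp measurable_snd))
    (fun i j x y h => by split_ifs <;> simp)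
  simp_rw [prod_indicator_subMat hB (sampleM_symm W _)] at h
  have h1 : ∫ ω, (if subMat N (sampleM W ω) = B then (1:ℝ) else 0) ∂sampleP =
      sampleP.real {ω | subMat N (sampleM W ω) = B} := by
    rw [← integral_indicator_one (measurableSet_subMat_eq (measurable_sampleM hW) N B)]
    rfl
  rw [← h1, h]
  unfold tEqW
  refine integral_congr_ae (ae_of_all _ fun x => ?_)
  refine Finset.prod_congr rfl fun i _ => Finset.prod_congr rfl fun j _ => ?_
  simp [mul_ite]

/-! ### Degrees in the `W`-random multigraph and the density of `W_t` -/

/-- The entry of the `W`-random multigraph seen from a vertex of type `x`, as a function of the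
type `p.1` of the other vertex and of the uniform variable `p.2` of the pair. -/
def rowFun (W : ℝ → ℝ → ℕ → ℝ) (x : ℝ) (p : ℝ × ℝ) : ℝ := quantile W x p.1 p.2

lemma rowFun_nonneg (W : ℝ → ℝ → ℕ → ℝ) (x : ℝ) (p : ℝ × ℝ) : 0 ≤ rowFun W x p :=
  Nat.cast_nonneg _

section
variable {W : ℝ → ℝ → ℕ → ℝ} (hW : IsMultigraphon W)
include hW

lemma measurable_rowFun : Measurable (Function.uncurry (rowFun W)) :=
  (measurable_of_countable (fun n : ℕ => (n : ℝ))).comp (measurable_quantile hW)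

/-- Where `rowFun W x` is integrable its mean is the degree of `x`. -/
lemma integral_rowFun {x : ℝ} (hx : x ∈ Icc (0:ℝ) 1)
    (hi : Integrable (rowFun W x) (unitM.prod unitM)) :
    ∫ p, rowFun W x p ∂(unitM.prod unitM) = degW W x := by
  rw [integral_prod _ hi]
  refine integral_congr_ae ?_
  have hi2 : ∀ᵐ y ∂unitM, Integrable (fun u => rowFun W x (y, u)) unitM := hi.prod_right_ae
  filter_upwards [hi2, ae_unitM_mem] with y hy hym
  have hW0 : ∀ k : ℕ, 0 ≤ (k:ℝ) * W x y k := fun k =>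
    mul_nonneg (Nat.cast_nonneg _) (hW.2.1 x y k).1
  have h1 : ∫⁻ u, ENNReal.ofReal (rowFun W x (y, u)) ∂unitM =
      ∑' k : ℕ, ENNReal.ofReal (k * W x y k) := by
    have := lintegral_quantile hW hx hym fun k => ENNReal.ofReal (k : ℝ)
    simp_rw [← ENNReal.ofReal_mul (Nat.cast_nonneg _)] at this
    exact this
  have hfin : ∫⁻ u, ENNReal.ofReal (rowFun W x (y, u)) ∂unitM ≠ ⊤ := by
    have := hy.lintegral_lt_top
    exact this.ne
  rw [integral_eq_lintegral_of_nonneg_ae (ae_of_all _ fun u => rowFun_nonneg W x _)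
    hy.aestronglyMeasurable, h1, ENNReal.tsum_toReal_eq fun k => ENNReal.ofReal_ne_top]
  exact tsum_congr fun k => ENNReal.toReal_ofReal (hW0 k)

section moments
variable (h2 : Integrable (fun p : ℝ × ℝ × ℝ => rowFun W p.1 p.2 ^ 2)
  (unitM.prod (unitM.prod unitM)))
include h2

lemma ae_integral_rowFun :
    ∀ᵐ x ∂unitM, ∫ p, rowFun W x p ∂(unitM.prod unitM) = degW W x := by
  filter_upwards [ae_memLp_section (measurable_rowFun hW) h2, ae_unitM_mem] with x hx hxm
  exact integral_rowFun hW hxm (hx.integrable (by norm_num))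

lemma integrable_rowFun :
    Integrable (fun p : ℝ × ℝ × ℝ => rowFun W p.1 p.2) (unitM.prod (unitM.prod unitM)) := by
  have hm : Measurable fun p : ℝ × ℝ × ℝ => rowFun W p.1 p.2 := measurable_rowFun hW
  exact ((memLp_two_iff_integrable_sq hm.aestronglyMeasurable).2 h2).integrable (by norm_num)

lemma integral_rowFun_eq_rhoW :
    ∫ p : ℝ × ℝ × ℝ, rowFun W p.1 p.2 ∂(unitM.prod (unitM.prod unitM)) = rhoW W := by
  rw [integral_prod _ (integrable_rowFun hW h2)]
  exact integral_congr_ae (ae_integral_rowFun hW h2)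

end moments

end

/-- Types of distinct vertices are almost surely distinct, so the diagonal of `W_t` is only seen by
the loops. -/
lemma ae_ne_pi {k : ℕ} {i j : Fin k} (hij : i ≠ j) :
    ∀ᵐ x ∂(Measure.pi fun _ : Fin k => unitM), x i ≠ x j := by
  have h1 : ∀ᵐ p ∂(unitM.prod unitM), p.1 ≠ p.2 := by
    have hms : MeasurableSet {p : ℝ × ℝ | p.1 ≠ p.2} :=
      (measurableSet_eq_fun measurable_fst measurable_snd).compl
    refine (Measure.ae_prod_iff_ae_ae hms).2 (ae_of_all _ fun x => ?_)
    refine ae_restrict_of_ae ?_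
    simp [ae_iff]
  rw [← Measure.infinitePi_eq_pi]
  exact (measurePreserving_two (θ := unitM) hij).quasiMeasurePreserving.ae h1

/-- The transition probability of a queue, averaged over the initial value of the entry, gives
`W_t`. -/
lemma tsum_entryQ_offdiag {W : ℝ → ℝ → ℕ → ℝ} {t x y r : ℝ} {A : ℕ → ℕ → ℕ} {i j : ℕ}
    (hij : i ≠ j) (hxy : x ≠ y) (hr : r = degW W x * degW W y / rhoW W) :
    ∑' h, W x y h * entryQ t A i j h r = WtER W t x y (A i j) := by
  rw [WtER, if_neg hxy, hr]
  simp only [entryQ, if_neg hij]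

/-- The diagonal analogue of `tsum_entryQ_offdiag`; odd initial values contribute nothing, so the
sum may be reindexed over the halved entry. -/
lemma tsum_entryQ_diag {W : ℝ → ℝ → ℕ → ℝ} {t x r : ℝ} {A : ℕ → ℕ → ℕ} {i : ℕ}
    (hA : 2 ∣ A i i) (hr : r / 2 = degW W x ^ 2 / (2 * rhoW W)) :
    ∑' h, W x x h * entryQ t A i i h r = WtER W t x x (A i i) := by
  rw [WtER, if_pos rfl, if_pos hA]
  have hinj : Function.Injective fun h : ℕ => 2 * h := fun a b h => by simpa using h
  rw [← hinj.tsum_eq]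
  · refine tsum_congr fun h => ?_
    simp [entryQ, hA, hr]
  · intro h hh
    by_contra hn
    apply hh
    have : ¬ 2 ∣ h := fun ⟨l, hl⟩ => hn ⟨l, hl.symm⟩
    simp [entryQ, this]

/-- The limiting expectation is the induced density of `W_t`. -/
lemma integral_queueProb_sample {W : ℝ → ℝ → ℕ → ℝ} (hW : IsMultigraphon W)
    (hρ : 0 < rhoW W)
    (h2 : Integrable (fun p : ℝ × ℝ × ℝ => rowFun W p.1 p.2 ^ 2)
      (unitM.prod (unitM.prod unitM)))
    {t : ℝ} (ht : 0 ≤ t) {k : ℕ} {A : ℕ → ℕ → ℕ} (hA : IsAdjOn k A) :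
    ∫ ω, queueProb t A k (sampleM W ω)
        (fun i => ∫ p, rowFun W (ω (.inl i)) p ∂(unitM.prod unitM)) (rhoW W)⁻¹ ∂sampleP =
      tEqW k A (WtER W t) := by
  set D : ℝ → ℝ := fun x => ∫ p, rowFun W x p ∂(unitM.prod unitM) with hD
  have hD0 : ∀ x, 0 ≤ D x := fun x => integral_nonneg fun p => rowFun_nonneg W x p
  have hDm : Measurable D := measurable_condMean (measurable_rowFun hW)
  have hr0 : ∀ x y, 0 ≤ (rhoW W)⁻¹ * (D x * D y) := fun x y =>
    mul_nonneg (inv_nonneg.2 hρ.le) (mul_nonneg (hD0 x) (hD0 y))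
  have h := integral_sample hW k
    (fun i j x y h => entryQ t A i j h ((rhoW W)⁻¹ * (D x * D y))) ?_ ?_
  · unfold queueProb
    rw [h]
    unfold tEqW
    rw [← pi_unitM]
    have hae : ∀ᵐ x ∂(Measure.pi fun _ : Fin k => unitM), ∀ i, D (x i) = degW W (x i) := by
      rw [ae_all_iff]
      intro i
      exact (measurePreserving_eval (fun _ : Fin k => unitM) i).quasiMeasurePreserving.ae
        (ae_integral_rowFun hW h2)
    have hne : ∀ᵐ x ∂(Measure.pi fun _ : Fin k => unitM), ∀ i j, i ≠ j → x i ≠ x j := by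
      simp only [ae_all_iff]
      exact fun i j hij => ae_ne_pi hij
    refine integral_congr_ae ?_
    filter_upwards [hae, hne] with x hx hxne
    refine Finset.prod_congr rfl fun i _ => Finset.prod_congr rfl fun j _ => ?_
    by_cases hij : i = j
    · subst hij
      refine tsum_entryQ_diag (hA.2.1 i) ?_
      rw [hx i]; field_simp
    · refine tsum_entryQ_offdiag (fun h => hij (Fin.ext h)) (hxne i j hij) ?_
      rw [hx i, hx j]; field_simp
  · intro i j
    have h1 : Measurable fun p : ℝ × ℝ × ℕ => (p.2.2, (rhoW W)⁻¹ * (D p.1 * D p.2.1)) := by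
      fun_prop
    have h2 := (measurable_entryQ t A i j).comp h1
    simp only [Function.comp_def] at h2
    exact h2
  · intro i j x y h
    rw [abs_of_nonneg (entryQ_nonneg ht A i j h (hr0 x y))]
    exact entryQ_le_one ht A i j h (hr0 x y)

/-- An off-diagonal entry is driven by three independent uniform variables: the types of its two
vertices and the variable of the pair. -/
lemma measurePreserving_entry {i j : ℕ} (h : i ≠ j) :
    MeasurePreserving (fun ω : ℕ ⊕ ℕ × ℕ → ℝ => (ω (.inl i), (ω (.inl j), ω (.inr (i, j)))))
      sampleP (unitM.prod (unitM.prod unitM)) :=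
  measurePreserving_three (by simpa using h) (by simp) (by simp)

/-- Replacing the degrees of the `W`-random multigraph by averages over `L ^ 2` entries. -/
lemma sample_replace {W : ℝ → ℝ → ℕ → ℝ} (hW : IsMultigraphon W)
    (h2 : Integrable (fun p : ℝ × ℝ × ℝ => rowFun W p.1 p.2 ^ 2)
      (unitM.prod (unitM.prod unitM))) {c : ℝ}
    (hc : ∫ p : ℝ × ℝ × ℝ, rowFun W p.1 p.2 ^ 2 ∂(unitM.prod (unitM.prod unitM)) ≤ c)
    {t : ℝ} (ht : 0 ≤ t) (k : ℕ) (A : ℕ → ℕ → ℕ) {L : ℕ} (hL : 1 ≤ L) {a b : ℝ} (ha : 0 ≤ a)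
    (hb : 0 ≤ b) :
    |∫ ω, queueProb t A k (sampleM W ω)
        (fun i => ∫ p, rowFun W (ω (.inl i)) p ∂(unitM.prod unitM)) a ∂sampleP -
      ∫ ω, queueProb t A k (sampleM W ω) (rowAvg k (L ^ 2) (sampleM W ω)) b ∂sampleP| ≤
      replErr k c a b L := by
  have hξ : ∀ i : ℕ, MeasurePreserving (fun ω : ℕ ⊕ ℕ × ℕ → ℝ => ω (.inl i)) sampleP unitM :=
    fun i => measurePreserving_eval' (Sum.inl i)
  have htri : ∀ i < k, ∀ a b : ℕ, a ≠ b → MeasurePreserving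
      (fun ω : ℕ ⊕ ℕ × ℕ → ℝ => (ω (.inl i), ((ω (.inl (k + a)), ω (.inr (i, k + a))),
        (ω (.inl (k + b)), ω (.inr (i, k + b)))))) sampleP
      (unitM.prod ((unitM.prod unitM).prod (unitM.prod unitM))) := by
    intro i hi a b hab
    refine measurePreserving_five ?_ ?_ ?_ ?_ ?_ ?_ ?_
    · simp; omega
    all_goals simp [hab]
  have hMη : ∀ i < k, ∀ (j : ℕ) (ω : ℕ ⊕ ℕ × ℕ → ℝ), (sampleM W ω i (k + j) : ℝ) =
      rowFun W (ω (.inl i)) (ω (.inl (k + j)), ω (.inr (i, k + j))) := by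
    intro i hi j ω
    rw [sampleM_of_le W ω (by omega)]; rfl
  exact sampling_bound (h := rowFun W) (P := sampleP) (ξ := fun i ω => ω (.inl i))
    (η := fun i j ω => (ω (.inl (k + j)), ω (.inr (i, k + j))))
    (measurable_rowFun hW) (rowFun_nonneg W) h2 hc hξ htri
    (measurable_sampleM hW) hMη ht A hL ha hb

/-! ### Independent uniformly chosen vertices of a finite multigraph -/

/-- The uniform distribution on the vertex set of an `n`-vertex multigraph. -/
def unifM (n : ℕ) : Measure (Fin n) := (n : ℝ≥0∞)⁻¹ • Measure.count

instance (n : ℕ) [NeZero n] : IsProbabilityMeasure (unifM n) := ⟨by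
  rw [unifM, Measure.smul_apply, Measure.count_univ, ENat.card_eq_coe_fintype_card,
    Fintype.card_fin, smul_eq_mul]
  exact ENNReal.inv_mul_cancel (by exact_mod_cast NeZero.ne n) (by simp)⟩

lemma integral_unifM (n : ℕ) (f : Fin n → ℝ) : ∫ v, f v ∂(unifM n) = (∑ v, f v) / n := by
  rw [unifM, integral_smul_measure, integral_count]
  simp [div_eq_inv_mul]

lemma unifM_singleton (n : ℕ) (v : Fin n) : unifM n {v} = (n : ℝ≥0∞)⁻¹ := by
  simp [unifM]

/-- The law of an infinite sequence of independent uniformly chosen vertices. -/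
def vertP (n : ℕ) [NeZero n] : Measure (ℕ → Fin n) := Measure.infinitePi fun _ => unifM n

instance (n : ℕ) [NeZero n] : IsProbabilityMeasure (vertP n) := by unfold vertP; infer_instance

/-- The adjacency matrix of `X` read along a sequence of vertices. -/
def blowM {Ω : Type*} {n : ℕ} (X : Ω → ℕ → ℕ → ℕ) (p : Ω × (ℕ → Fin n)) (i j : ℕ) : ℕ :=
  X p.1 (p.2 i) (p.2 j)

/-- The entry of `X` between two vertices, the first one together with `X` serving as the
conditioning variable. -/
def pairFun {Ω : Type*} {n : ℕ} (X : Ω → ℕ → ℕ → ℕ) (v : Ω × Fin n) (y : Fin n) : ℝ :=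
  X v.1 v.2 y

lemma pairFun_nonneg {Ω : Type*} {n : ℕ} (X : Ω → ℕ → ℕ → ℕ) (v : Ω × Fin n) (y : Fin n) :
    0 ≤ pairFun X v y := Nat.cast_nonneg _

/-- The mean entry of a row is the rescaled degree. -/
lemma integral_pairFun {Ω : Type*} {n : ℕ} (X : Ω → ℕ → ℕ → ℕ) (v : Ω × Fin n) :
    ∫ y, pairFun X v y ∂(unifM n) = (degB n (X v.1) v.2 : ℝ) / n := by
  rw [integral_unifM, degB, Finset.sum_range]
  push_cast
  rfl

section
variable {Ω : Type*} [MeasurableSpace Ω] {n : ℕ} {X : Ω → ℕ → ℕ → ℕ}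
  (hX : ∀ i j, Measurable fun ω => X ω i j)
include hX

lemma measurable_pair : Measurable fun p : (Ω × Fin n) × Fin n => X p.1.1 p.1.2 p.2 := by
  have h1 : Measurable fun p : Ω × (Fin n × Fin n) => X p.1 p.2.1 p.2.2 :=
    measurable_from_prod_countable_left fun e => hX e.1 e.2
  have h2 : Measurable fun p : (Ω × Fin n) × Fin n => (p.1.1, (p.1.2, p.2)) := by fun_prop
  have h3 := h1.comp h2
  simp only [Function.comp_def] at h3
  exact h3

lemma measurable_pairFun : Measurable (Function.uncurry (pairFun (n := n) X)) :=
  (measurable_of_countable (fun n : ℕ => (n : ℝ))).comp (measurable_pair hX)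

lemma measurable_blowM (i j : ℕ) : Measurable fun p : Ω × (ℕ → Fin n) => blowM X p i j := by
  have h2 : Measurable fun p : Ω × (ℕ → Fin n) => ((p.1, p.2 i), p.2 j) := by fun_prop
  have h3 := (measurable_pair hX).comp h2
  simp only [Function.comp_def] at h3
  exact h3

variable [NeZero n] {μ : Measure Ω} [IsProbabilityMeasure μ]

/-- Uniform bounds on the second moments of the entries give a bound on the second moment of the
entry between two random vertices. -/
lemma pairFun_sq {c : ℝ} (hc : 0 ≤ c)
    (h : ∀ i < n, ∀ j < n, ∫⁻ ω, ENNReal.ofReal ((X ω i j : ℝ) ^ 2) ∂μ ≤ ENNReal.ofReal c) :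
    Integrable (fun p : (Ω × Fin n) × Fin n => pairFun X p.1 p.2 ^ 2)
      ((μ.prod (unifM n)).prod (unifM n)) ∧
    ∫ p, pairFun X p.1 p.2 ^ 2 ∂((μ.prod (unifM n)).prod (unifM n)) ≤ c := by
  have hm : Measurable fun p : (Ω × Fin n) × Fin n => pairFun X p.1 p.2 := measurable_pairFun hX
  have hle : ∫⁻ p, ENNReal.ofReal (pairFun X p.1 p.2 ^ 2)
      ∂((μ.prod (unifM n)).prod (unifM n)) ≤ ENNReal.ofReal c := by
    rw [lintegral_prod_symm _ (hm.pow_const 2).ennreal_ofReal.aemeasurable]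
    have hb : ∀ y : Fin n, ∫⁻ v : Ω × Fin n, ENNReal.ofReal (pairFun X v y ^ 2)
        ∂(μ.prod (unifM n)) ≤ ENNReal.ofReal c := by
      intro y
      have hmy : Measurable fun v : Ω × Fin n => pairFun X v y :=
        (measurable_pairFun hX).comp (measurable_id.prodMk measurable_const)
      rw [lintegral_prod_symm _ (hmy.pow_const 2).ennreal_ofReal.aemeasurable]
      refine (lintegral_mono fun x : Fin n => h x x.2 y y.2).trans ?_
      simp
    refine (lintegral_mono hb).trans ?_
    simp
  have hi : Integrable (fun p : (Ω × Fin n) × Fin n => pairFun X p.1 p.2 ^ 2)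
      ((μ.prod (unifM n)).prod (unifM n)) := by
    refine ⟨(hm.pow_const 2).aestronglyMeasurable, ?_⟩
    rw [hasFiniteIntegral_iff_ofReal (ae_of_all _ fun p => sq_nonneg _)]
    exact hle.trans_lt ENNReal.ofReal_lt_top
  refine ⟨hi, ?_⟩
  rw [integral_eq_lintegral_of_nonneg_ae (ae_of_all _ fun p => sq_nonneg _) hi.aestronglyMeasurable]
  exact ENNReal.toReal_le_of_le_ofReal hc hle

omit hX in
lemma measurePreserving_vert_pair {i j : ℕ} (h : i ≠ j) :
    MeasurePreserving (fun p : Ω × (ℕ → Fin n) => ((p.1, p.2 i), p.2 j)) (μ.prod (vertP n))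
      ((μ.prod (unifM n)).prod (unifM n)) := by
  have h1 := (MeasurePreserving.id μ).prod (measurePreserving_two (θ := unifM n) h)
  exact ((measurePreserving_prodAssoc μ (unifM n) (unifM n)).symm).comp h1

omit hX in
lemma measurePreserving_vert_three {i a b : ℕ} (h1 : i ≠ a) (h2 : i ≠ b) (h3 : a ≠ b) :
    MeasurePreserving (fun p : Ω × (ℕ → Fin n) => ((p.1, p.2 i), (p.2 a, p.2 b)))
      (μ.prod (vertP n)) ((μ.prod (unifM n)).prod ((unifM n).prod (unifM n))) := by
  have h1 := (MeasurePreserving.id μ).prod (measurePreserving_three (θ := unifM n) h1 h2 h3)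
  exact ((measurePreserving_prodAssoc μ (unifM n) ((unifM n).prod (unifM n))).symm).comp h1

/-- Replacing the degrees of a finite multigraph by averages over `L ^ 2` sampled entries. -/
lemma vert_replace {c : ℝ} (hc : 0 ≤ c)
    (h : ∀ i < n, ∀ j < n, ∫⁻ ω, ENNReal.ofReal ((X ω i j : ℝ) ^ 2) ∂μ ≤ ENNReal.ofReal c)
    {t : ℝ} (ht : 0 ≤ t) (k : ℕ) (A : ℕ → ℕ → ℕ) {L : ℕ} (hL : 1 ≤ L) {a b : ℝ} (ha : 0 ≤ a)
    (hb : 0 ≤ b) :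
    |∫ p, queueProb t A k (blowM X p) (fun i => (degB n (X p.1) (p.2 i) : ℝ) / n) a
        ∂(μ.prod (vertP n)) -
      ∫ p, queueProb t A k (blowM X p) (rowAvg k (L ^ 2) (blowM X p)) b ∂(μ.prod (vertP n))| ≤
      replErr k c a b L := by
  obtain ⟨h2, hc2⟩ := pairFun_sq (μ := μ) hX hc h
  have hξ : ∀ i : ℕ, MeasurePreserving (fun p : Ω × (ℕ → Fin n) => (p.1, p.2 i))
      (μ.prod (vertP n)) (μ.prod (unifM n)) := fun i =>
    (MeasurePreserving.id μ).prod (measurePreserving_eval' (θ := unifM n) i)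
  have htri : ∀ i < k, ∀ a b : ℕ, a ≠ b → MeasurePreserving
      (fun p : Ω × (ℕ → Fin n) => ((p.1, p.2 i), (p.2 (k + a), p.2 (k + b))))
      (μ.prod (vertP n)) ((μ.prod (unifM n)).prod ((unifM n).prod (unifM n))) :=
    fun i hi a b hab => measurePreserving_vert_three (by omega) (by omega) (by omega)
  have hMη : ∀ i < k, ∀ (j : ℕ) (p : Ω × (ℕ → Fin n)),
      (blowM X p i (k + j) : ℝ) = pairFun X (p.1, p.2 i) (p.2 (k + j)) := fun _ _ _ _ => rfl
  have := sampling_bound (h := pairFun (n := n) X) (P := μ.prod (vertP n))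
    (ξ := fun i p => (p.1, p.2 i)) (η := fun i j p => p.2 (k + j))
    (measurable_pairFun hX) (pairFun_nonneg X) h2 hc2 hξ htri
    (measurable_blowM hX) hMη ht A hL ha hb
  simp only [integral_pairFun] at this
  exact this

/-- The mean entry between two random vertices is the edge density. -/
lemma integral_blowM {m : ℕ} (hadj : ∀ ω, IsAdjOnM n m (X ω)) {c : ℝ} (hc : 0 ≤ c)
    (h : ∀ i < n, ∀ j < n, ∫⁻ ω, ENNReal.ofReal ((X ω i j : ℝ) ^ 2) ∂μ ≤ ENNReal.ofReal c) :
    Integrable (fun p : Ω × (ℕ → Fin n) => (blowM X p 0 1 : ℝ) ^ 2) (μ.prod (vertP n)) ∧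
    ∫ p, (blowM X p 0 1 : ℝ) ^ 2 ∂(μ.prod (vertP n)) ≤ c ∧
    ∫ p, (blowM X p 0 1 : ℝ) ∂(μ.prod (vertP n)) = 2 * m / (n : ℝ) ^ 2 := by
  obtain ⟨h2, hc2⟩ := pairFun_sq (μ := μ) hX hc h
  have hm : Measurable fun p : (Ω × Fin n) × Fin n => pairFun X p.1 p.2 := measurable_pairFun hX
  have hmp := measurePreserving_vert_pair (n := n) (μ := μ) (i := 0) (j := 1) (by simp)
  refine ⟨hmp.integrable_comp_of_integrable h2, ?_, ?_⟩
  · rw [← hmp.map_eq, integral_map hmp.measurable.aemeasurable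
      (hm.pow_const 2).aestronglyMeasurable] at hc2
    exact hc2
  · have h1 : ∫ p, (blowM X p 0 1 : ℝ) ∂(μ.prod (vertP n)) =
        ∫ p, pairFun X p.1 p.2 ∂((μ.prod (unifM n)).prod (unifM n)) := by
      rw [← hmp.map_eq, integral_map hmp.measurable.aemeasurable hm.aestronglyMeasurable]
      rfl
    have hi : Integrable (fun p : (Ω × Fin n) × Fin n => pairFun X p.1 p.2)
        ((μ.prod (unifM n)).prod (unifM n)) :=
      ((memLp_two_iff_integrable_sq hm.aestronglyMeasurable).2 h2).integrable (by norm_num)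
    rw [h1, integral_prod _ hi, integral_prod _ hi.integral_prod_left]
    have h3 : ∀ ω, ∫ v, ∫ y, pairFun X (ω, v) y ∂(unifM n) ∂(unifM n) =
        2 * m / (n : ℝ) ^ 2 := by
      intro ω
      simp_rw [integral_pairFun]
      rw [integral_unifM, ← Finset.sum_div]
      have h4 : ∑ v : Fin n, (degB n (X ω) v : ℝ) = 2 * m := by
        rw [← Finset.sum_range fun i => (degB n (X ω) i : ℝ)]
        unfold degB
        exact_mod_cast (hadj ω).2
      rw [h4]; ring
    simp_rw [h3]
    simp

end

/-! ### Exchangeability and sampling with replacement -/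

lemma measurePreserving_vert_fin (n N : ℕ) [NeZero n] :
    MeasurePreserving (fun (φ : ℕ → Fin n) (i : Fin N) => φ i) (vertP n)
      (Measure.pi fun _ : Fin N => unifM n) := by
  refine ⟨by fun_prop, ?_⟩
  rw [vertP, Measure.map_infinitePi_infinitePi_of_inj Fin.val_injective, Measure.infinitePi_eq_pi]

/-- Sampling `N` vertices with replacement from `B` produces `A` with probability `t_=(A,B)`. -/
lemma vertP_real_eq_tEqB {n N : ℕ} [NeZero n] {A B : ℕ → ℕ → ℕ} (hA : IsAdjOn N A) :
    (vertP n).real {φ | subMat N (fun i j => B (φ i) (φ j)) = A} = tEqB N n A B := by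
  set S : Finset (Fin N → Fin n) := Finset.univ.filter fun φ : Fin N → Fin n =>
    ∀ i j : Fin N, A i j = B (φ i) (φ j) with hS
  have hmp := measurePreserving_vert_fin n N
  have h1 : {φ : ℕ → Fin n | subMat N (fun i j => B (φ i) (φ j)) = A} =
      (fun (φ : ℕ → Fin n) (i : Fin N) => φ i) ⁻¹' (S : Set (Fin N → Fin n)) := by
    ext φ
    simp only [hS, Set.mem_ofPred_eq, Set.mem_preimage, Finset.coe_filter, Finset.mem_univ,
      true_and]
    constructor
    · rintro rfl i j
      simp [subMat]
    · intro h
      funext i j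
      unfold subMat
      split_ifs with hij
      · exact (h ⟨i, hij.1⟩ ⟨j, hij.2⟩).symm
      · exact (hA.2.2 i j (by omega)).symm
  rw [h1, measureReal_def, hmp.measure_preimage MeasurableSet.of_discrete.nullMeasurableSet,
    ← sum_measure_singleton]
  simp_rw [Measure.pi_singleton, unifM_singleton]
  rw [tEqB, Finset.sum_const, Finset.prod_const, Finset.card_univ, Fintype.card_fin, nsmul_eq_mul,
    ENNReal.toReal_mul, ENNReal.toReal_pow, ENNReal.toReal_inv, ENNReal.toReal_natCast,
    ENNReal.toReal_natCast, inv_pow, div_eq_mul_inv]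

section
variable {Ω : Type*} [MeasurableSpace Ω] {n : ℕ} [NeZero n] {X : Ω → ℕ → ℕ → ℕ}
  (hX : ∀ i j, Measurable fun ω => X ω i j) {μ : Measure Ω} [IsProbabilityMeasure μ]
include hX

omit [IsProbabilityMeasure μ] in
/-- Sampling vertices independently of the random matrix `X` gives the expected induced density. -/
lemma blowM_real_subMat {N : ℕ} {B : ℕ → ℕ → ℕ} (hB : IsAdjOn N B) :
    Measurable (fun ω => tEqB N n B (X ω)) ∧
    (μ.prod (vertP n)).real {p | subMat N (blowM X p) = B} = ∫ ω, tEqB N n B (X ω) ∂μ := by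
  have hms := measurableSet_subMat_eq (measurable_blowM (n := n) hX) N B
  have h1 : ∀ ω, (vertP n (Prod.mk ω ⁻¹' {p | subMat N (blowM X p) = B})).toReal =
      tEqB N n B (X ω) := fun ω => vertP_real_eq_tEqB (B := X ω) hB
  have h2 : Measurable fun ω => vertP n (Prod.mk ω ⁻¹' {p | subMat N (blowM X p) = B}) :=
    measurable_measure_prodMk_left hms
  refine ⟨?_, ?_⟩
  · simp_rw [← h1]
    exact h2.ennreal_toReal
  · simp_rw [← h1]
    rw [measureReal_def, Measure.prod_apply hms, integral_toReal h2.aemeasurable]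
    exact ae_of_all _ fun ω => measure_lt_top _ _

omit [NeZero n] in
/-- Vertex exchangeability for expectations of bounded functions. -/
lemma exch_integral (hadj : ∀ ω, IsAdjOn n (X ω)) (hex : VertexExchangeable μ n X)
    {τ : Equiv.Perm ℕ} (hτ : ∀ i, n ≤ i → τ i = i) {G : (ℕ → ℕ → ℕ) → ℝ} {R : ℝ}
    (hG : ∀ B, |G B| ≤ R) :
    ∫ ω, G (fun i j => X ω (τ i) (τ j)) ∂μ = ∫ ω, G (X ω) ∂μ := by
  have hsub : ∀ B, IsAdjOn n B → subMat n B = B := by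
    intro B hB
    funext i j
    unfold subMat
    split_ifs with hij
    · rfl
    · exact (hB.2.2 i j (by omega)).symm
  have hτn : ∀ i, n ≤ i → n ≤ τ i := fun i hi => by rw [hτ i hi]; exact hi
  have hadj' : ∀ ω, IsAdjOn n fun i j => X ω (τ i) (τ j) := fun ω =>
    ⟨fun i j => (hadj ω).1 _ _, fun i => (hadj ω).2.1 _, fun i j hij =>
      (hadj ω).2.2 _ _ (hij.imp (hτn i) (hτn j))⟩
  have h1 := (subMat_law (P := μ) hX n (ae_of_all _ fun ω => by
    rw [hsub _ (hadj ω)]; exact hadj ω)).2 G R hG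
  have h2 := (subMat_law (P := μ) (M := fun ω i j => X ω (τ i) (τ j)) (fun i j => hX _ _) n
    (ae_of_all _ fun ω => by rw [hsub _ (hadj' ω)]; exact hadj' ω)).2 G R hG
  simp only [hsub _ (hadj _)] at h1
  simp only [hsub _ (hadj' _)] at h2
  rw [h1, h2]
  refine tsum_congr fun B => ?_
  rw [measureReal_def, measureReal_def, hex τ hτ B.1]

end

lemma queueProb_congr {t : ℝ} {A : ℕ → ℕ → ℕ} {k : ℕ} {B B' : ℕ → ℕ → ℕ} {s s' : ℕ → ℝ} {a : ℝ}
    (hB : ∀ i < k, ∀ j < k, B i j = B' i j) (hs : ∀ i < k, s i = s' i) :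
    queueProb t A k B s a = queueProb t A k B' s' a := by
  refine Finset.prod_congr rfl fun e he => ?_
  simp only [upperPairs, Finset.mem_filter, Finset.mem_product, Finset.mem_range] at he
  rw [hB _ he.1.1 _ he.1.2, hs _ he.1.1, hs _ he.1.2]

/-- Both rates are written through the rescaled degrees `d / n` and the reciprocal of the density
`2 m / n ^ 2`. For `m = 0` both sides use the rate `0`. -/
lemma yMarg_eq_queueProb {n : ℕ} (hn : n ≠ 0) (k m : ℕ) {B : ℕ → ℕ → ℕ} (t : ℝ)
    (A : ℕ → ℕ → ℕ) :
    yMarg k n m B t A =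
      queueProb t A k B (fun i => (degB n B i : ℝ) / n) ((2 * m / (n : ℝ) ^ 2)⁻¹) := by
  have hn' : (n : ℝ) ≠ 0 := by exact_mod_cast hn
  have hr : ∀ x y : ℝ, (2 * m / (n : ℝ) ^ 2)⁻¹ * (x / n * (y / n)) = x * y / (2 * m) := by
    intro x y
    rw [inv_div]
    field_simp
  unfold yMarg queueProb upperPairs
  simp only [hr]
  rw [Finset.prod_filter, Finset.prod_product]
  refine Finset.prod_congr rfl fun i _ => ?_
  rw [Finset.prod_filter]
  refine Finset.prod_congr rfl fun j _ => ?_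
  refine if_congr Iff.rfl ?_ rfl
  unfold entryQ
  by_cases hij : i = j
  · subst hij
    simp only [if_true]
    rw [show (degB n B i : ℝ) * degB n B i / (2 * m) / 2 = (degB n B i : ℝ) ^ 2 / (4 * m) by
      rw [div_div]; ring]
  · simp only [if_neg hij]

/-- A permutation of the vertex set prescribed on the first `k` vertices. -/
lemma exists_perm_extend {n k : ℕ} (φ : ℕ → Fin n)
    (hφ : ∀ i < k, ∀ j < k, φ i = φ j → i = j) :
    ∃ τ : Equiv.Perm ℕ, (∀ i, n ≤ i → τ i = i) ∧ (∀ i < n, τ i < n) ∧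
      ∀ i < k, τ i = φ i := by
  have hkn : k ≤ n := by
    have := Fintype.card_le_of_injective (fun i : Fin k => φ i) fun a b h =>
      Fin.ext (hφ a a.2 b b.2 h)
    simpa using this
  obtain ⟨e, he⟩ : ∃ e : Equiv.Perm (Fin n), ∀ i : Fin k, e (Fin.castLE hkn i) = φ i :=
    Equiv.Perm.exists_extending_pair (Fin.castLE hkn) (fun i : Fin k => φ i)
      (Fin.castLE_injective hkn) fun a b h => Fin.ext (hφ a a.2 b b.2 h)
  refine ⟨e.extendDomain Fin.equivSubtype, fun i hi => ?_, fun i hi => ?_, fun i hi => ?_⟩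
  · exact Equiv.Perm.extendDomain_apply_not_subtype _ _ (by simpa using hi)
  · have := Equiv.Perm.extendDomain_apply_image e Fin.equivSubtype ⟨i, hi⟩
    simp only [Fin.equivSubtype_apply] at this
    rw [this]
    exact Fin.is_lt _
  · have := Equiv.Perm.extendDomain_apply_image e Fin.equivSubtype (Fin.castLE hkn ⟨i, hi⟩)
    rw [he] at this
    simpa using this

lemma degB_perm {n : ℕ} {τ : Equiv.Perm ℕ} (hτ : ∀ i < n, τ i < n) (B : ℕ → ℕ → ℕ) (i : ℕ) :
    degB n (fun i j => B (τ i) (τ j)) i = degB n B (τ i) := by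
  unfold degB
  have himg : (Finset.range n).image τ = Finset.range n := by
    refine Finset.eq_of_subset_of_card_le (fun x hx => ?_) ?_
    · obtain ⟨y, hy, rfl⟩ := Finset.mem_image.1 hx
      exact Finset.mem_range.2 (hτ y (Finset.mem_range.1 hy))
    · rw [Finset.card_image_of_injective _ τ.injective]
  conv_rhs => rw [← himg]
  rw [Finset.sum_image fun a _ b _ h => τ.injective h]

/-! ### Comparison with sampled vertices; truncation and moments -/

/-- Probability that two of the first `k` sampled vertices coincide. -/
lemma vertP_collision (n k : ℕ) [NeZero n] :
    (vertP n).real {φ | ¬ ∀ i < k, ∀ j < k, φ i = φ j → i = j} ≤ (k : ℝ) ^ 2 / n := by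
  set S := (Finset.range k ×ˢ Finset.range k).filter fun e : ℕ × ℕ => e.1 ≠ e.2 with hS
  have hsub : {φ : ℕ → Fin n | ¬ ∀ i < k, ∀ j < k, φ i = φ j → i = j} ⊆
      ⋃ e ∈ S, {φ | φ e.1 = φ e.2} := by
    intro φ hφ
    simp only [Set.mem_ofPred_eq] at hφ
    push Not at hφ
    obtain ⟨i, hi, j, hj, h1, h2⟩ := hφ
    simp only [Set.mem_iUnion]
    exact ⟨(i, j), by simp [hS, hi, hj, h2], h1⟩
  have hone : ∀ e ∈ S, (vertP n).real {φ | φ e.1 = φ e.2} = 1 / n := by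
    intro e he
    have hne : e.1 ≠ e.2 := by simp [hS] at he; exact he.2
    have hmp := measurePreserving_two (θ := unifM n) hne
    have hms : MeasurableSet {p : Fin n × Fin n | p.1 = p.2} := MeasurableSet.of_discrete
    have h1 : (vertP n) {φ | φ e.1 = φ e.2} =
        ((unifM n).prod (unifM n)) {p : Fin n × Fin n | p.1 = p.2} :=
      hmp.measure_preimage hms.nullMeasurableSet
    have h2 : ∀ x : Fin n, Prod.mk x ⁻¹' {p : Fin n × Fin n | p.1 = p.2} = {x} := by
      intro x; ext y; simp [eq_comm]
    rw [measureReal_def, h1, Measure.prod_apply hms]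
    simp_rw [h2, unifM_singleton]
    simp
  calc (vertP n).real {φ | ¬ ∀ i < k, ∀ j < k, φ i = φ j → i = j}
      ≤ (vertP n).real (⋃ e ∈ S, {φ | φ e.1 = φ e.2}) := measureReal_mono hsub (measure_ne_top _ _)
    _ ≤ ∑ e ∈ S, (vertP n).real {φ | φ e.1 = φ e.2} := measureReal_biUnion_finset_le _ _
    _ = S.card * (1 / n) := by rw [Finset.sum_congr rfl hone]; simp
    _ ≤ (k : ℝ) ^ 2 * (1 / n) := by
        gcongr
        have : S.card ≤ k ^ 2 := (Finset.card_filter_le _ _).trans (by simp [sq])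
        exact_mod_cast this
    _ = _ := by ring

/-- By exchangeability the first `k` vertices may be replaced by `k` vertices chosen at random,
up to the probability that the latter collide. -/
lemma yMarg_sampling {Ω : Type*} [MeasurableSpace Ω] {n : ℕ} [NeZero n] {X : Ω → ℕ → ℕ → ℕ}
    (hX : ∀ i j, Measurable fun ω => X ω i j) {μ : Measure Ω} [IsProbabilityMeasure μ]
    {m : ℕ} (hadj : ∀ ω, IsAdjOn n (X ω)) (hex : VertexExchangeable μ n X)
    {t : ℝ} (ht : 0 ≤ t) (k : ℕ) (A : ℕ → ℕ → ℕ) :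
    |∫ ω, yMarg k n m (X ω) t A ∂μ -
      ∫ p, queueProb t A k (blowM X p) (fun i => (degB n (X p.1) (p.2 i) : ℝ) / n)
        ((2 * m / (n : ℝ) ^ 2)⁻¹) ∂(μ.prod (vertP n))| ≤ (k : ℝ) ^ 2 / n := by
  have hn : n ≠ 0 := NeZero.ne n
  set a : ℝ := (2 * m / (n : ℝ) ^ 2)⁻¹ with ha
  have ha0 : 0 ≤ a := by positivity
  set s : (ℕ → ℕ → ℕ) → ℕ → ℝ := fun B i => (degB n B i : ℝ) / n with hs
  have hs0 : ∀ B i, 0 ≤ s B i := fun B i => by positivity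
  set Q : Ω × (ℕ → Fin n) → ℝ := fun p =>
    queueProb t A k (blowM X p) (fun i => s (X p.1) (p.2 i)) a with hQ
  have hQ0 : ∀ p, 0 ≤ Q p := fun p => queueProb_nonneg ht A k _ (fun i => hs0 _ _) ha0
  have hQ1 : ∀ p, Q p ≤ 1 := fun p => queueProb_le_one ht A k _ (fun i => hs0 _ _) ha0
  have hsm : ∀ i, Measurable fun p : Ω × (ℕ → Fin n) => s (X p.1) (p.2 i) := by
    intro i
    have h1 := measurable_condMean (π := unifM n) (measurable_pairFun (n := n) hX)
    simp only [integral_pairFun] at h1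
    have h2 : Measurable fun p : Ω × (ℕ → Fin n) => (p.1, p.2 i) := by fun_prop
    have h3 := h1.comp h2
    simp only [Function.comp_def] at h3
    exact h3
  have hQm : Measurable Q := measurable_queueProb (measurable_blowM hX) hsm measurable_const
  have hQi : Integrable Q (μ.prod (vertP n)) :=
    Integrable.of_bound hQm.aestronglyMeasurable 1 (ae_of_all _ fun p => by
      rw [Real.norm_of_nonneg (hQ0 p)]; exact hQ1 p)
  set F : (ℕ → Fin n) → ℝ := fun φ => ∫ ω, Q (ω, φ) ∂μ with hF
  have hG1 : ∀ B, |queueProb t A k B (s B) a| ≤ 1 := fun B => by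
    rw [abs_of_nonneg (queueProb_nonneg ht A k _ (hs0 B) ha0)]
    exact queueProb_le_one ht A k _ (hs0 B) ha0
  set c : ℝ := ∫ ω, yMarg k n m (X ω) t A ∂μ with hc
  have hcG : c = ∫ ω, queueProb t A k (X ω) (s (X ω)) a ∂μ := by
    rw [hc]; simp_rw [yMarg_eq_queueProb hn]; rfl
  -- Without collisions the sampled vertices are the image of the first `k` under a permutation.
  have hgood : ∀ φ : ℕ → Fin n, (∀ i < k, ∀ j < k, φ i = φ j → i = j) → F φ = c := by
    intro φ hφ
    obtain ⟨τ, h1, h2, h3⟩ := exists_perm_extend φ hφ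
    rw [hcG, ← exch_integral hX hadj hex h1 hG1]
    refine integral_congr_ae (ae_of_all _ fun ω => queueProb_congr ?_ ?_)
    · intro i hi j hj
      simp only [blowM]
      rw [h3 i hi, h3 j hj]
    · intro i hi
      simp only [hs]
      rw [degB_perm h2 (X ω) i, h3 i hi]
  have hprob1 : ∀ f : Ω → ℝ, (∀ ω, 0 ≤ f ω) → (∀ ω, f ω ≤ 1) → Measurable f →
      0 ≤ ∫ ω, f ω ∂μ ∧ ∫ ω, f ω ∂μ ≤ 1 := by
    intro f h0 h1 hm
    refine ⟨integral_nonneg h0, ?_⟩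
    have hi : Integrable f μ := Integrable.of_bound hm.aestronglyMeasurable 1
      (ae_of_all _ fun ω => by rw [Real.norm_of_nonneg (h0 ω)]; exact h1 ω)
    refine (integral_mono hi (integrable_const 1) h1).trans ?_
    simp
  have hF01 : ∀ φ, 0 ≤ F φ ∧ F φ ≤ 1 := fun φ => by
    have hm : Measurable fun ω => Q (ω, φ) := hQm.comp (measurable_id.prodMk measurable_const)
    exact hprob1 _ (fun ω => hQ0 _) (fun ω => hQ1 _) hm
  have hc01 : 0 ≤ c ∧ c ≤ 1 := by
    have hn0 : 0 < n := Nat.pos_of_ne_zero hn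
    have hm : Measurable fun ω => queueProb t A k (X ω) (s (X ω)) a := by
      refine measurable_queueProb hX (fun i => ?_) measurable_const
      have h3 : Measurable fun ω => (degB n (X ω) i : ℝ) := by
        unfold degB
        have h4 : Measurable fun ω => ∑ j ∈ Finset.range n, X ω i j := by fun_prop
        exact (measurable_of_countable fun l : ℕ => (l : ℝ)).comp h4
      exact h3.div_const _
    rw [hcG]
    exact hprob1 _ (fun ω => queueProb_nonneg ht A k _ (hs0 _) ha0)
      (fun ω => queueProb_le_one ht A k _ (hs0 _) ha0) hm
  have hbadm : MeasurableSet {φ : ℕ → Fin n | ¬ ∀ i < k, ∀ j < k, φ i = φ j → i = j} := by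
    have : {φ : ℕ → Fin n | ¬ ∀ i < k, ∀ j < k, φ i = φ j → i = j} =
        (⋂ i, ⋂ (_ : i < k), ⋂ j, ⋂ (_ : j < k), {φ : ℕ → Fin n | φ i = φ j → i = j})ᶜ := by
      ext φ
      simp only [Set.mem_ofPred_eq, Set.mem_compl_iff, Set.mem_iInter]
    rw [this]
    refine (MeasurableSet.iInter fun i => MeasurableSet.iInter fun _ => MeasurableSet.iInter
      fun j => MeasurableSet.iInter fun _ => ?_).compl
    exact (by fun_prop : Measurable fun φ : ℕ → Fin n => (φ i, φ j))
      (MeasurableSet.of_discrete (s := {p : Fin n × Fin n | p.1 = p.2 → i = j}))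
  rw [integral_prod_symm _ hQi]
  have hFi : Integrable F (vertP n) := hQi.integral_prod_right
  have e1 : c - ∫ φ, ∫ ω, Q (ω, φ) ∂μ ∂(vertP n) = ∫ φ, (c - F φ) ∂(vertP n) := by
    rw [integral_sub (integrable_const c) hFi]; simp [hF]
  rw [e1]
  refine abs_integral_le_integral_abs.trans (le_trans ?_ (vertP_collision n k))
  rw [← integral_indicator_one hbadm]
  refine integral_mono ((integrable_const c).sub hFi).abs
    ((integrable_const (1:ℝ)).indicator hbadm) fun φ => ?_
  by_cases hφ : ∀ i < k, ∀ j < k, φ i = φ j → i = j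
  · rw [Set.indicator_of_notMem (by simpa using hφ)]
    simp [hgood φ hφ]
  · rw [Set.indicator_of_mem (by exact hφ)]
    rw [Pi.one_apply, abs_le]
    constructor <;> linarith [hF01 φ, hc01.1, hc01.2, (hF01 φ).1, (hF01 φ).2]

/-- Convergence in probability to a constant of `[0,1]`-valued variables gives convergence of the
expectations. -/
lemma tendsto_integral_of_prob {Ω : ℕ → Type*} [∀ n, MeasurableSpace (Ω n)]
    {μ : ∀ n, Measure (Ω n)} [∀ n, IsProbabilityMeasure (μ n)] {f : ∀ n, Ω n → ℝ} {a : ℝ}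
    (hf : ∀ n, Measurable (f n)) (hf0 : ∀ n ω, 0 ≤ f n ω) (hf1 : ∀ n ω, f n ω ≤ 1)
    (ha0 : 0 ≤ a) (ha1 : a ≤ 1)
    (h : ∀ ε > (0:ℝ), Tendsto (fun n => μ n {ω | ε < |f n ω - a|}) atTop (𝓝 0)) :
    Tendsto (fun n => ∫ ω, f n ω ∂(μ n)) atTop (𝓝 a) := by
  have hi : ∀ n, Integrable (f n) (μ n) := fun n =>
    Integrable.of_bound (hf n).aestronglyMeasurable 1 (ae_of_all _ fun ω => by
      rw [Real.norm_of_nonneg (hf0 n ω)]; exact hf1 n ω)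
  rw [Metric.tendsto_atTop']
  intro ε hε
  have h1 : Tendsto (fun n => (μ n).real {ω | ε / 2 < |f n ω - a|}) atTop (𝓝 0) := by
    have := (ENNReal.tendsto_toReal ENNReal.zero_ne_top).comp (h (ε / 2) (by positivity))
    rw [ENNReal.toReal_zero] at this
    exact this
  obtain ⟨n0, hn0⟩ := eventually_atTop.1 (h1.eventually (gt_mem_nhds (show 0 < ε / 2 by positivity)))
  refine ⟨n0, fun n hn => ?_⟩
  have hms : MeasurableSet {ω | ε / 2 < |f n ω - a|} :=
    measurableSet_lt measurable_const (by have := hf n; fun_prop)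
  have e1 : ∫ ω, f n ω ∂(μ n) - a = ∫ ω, (f n ω - a) ∂(μ n) := by
    rw [integral_sub (hi n) (integrable_const a)]; simp
  have hii : Integrable ({ω | ε / 2 < |f n ω - a|}.indicator (1 : Ω n → ℝ)) (μ n) :=
    (integrable_const (1:ℝ)).indicator hms
  rw [Real.dist_eq, e1]
  refine lt_of_le_of_lt (abs_integral_le_integral_abs.trans (integral_mono
    (g := fun ω => ε / 2 + {ω | ε / 2 < |f n ω - a|}.indicator 1 ω)
    ((hi n).sub (integrable_const a)).abs ((integrable_const _).add hii) fun ω => ?_)) ?_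
  · by_cases hω : ε / 2 < |f n ω - a|
    · simp only [Set.indicator_of_mem (show ω ∈ {ω | ε / 2 < |f n ω - a|} from hω), Pi.one_apply]
      have : |f n ω - a| ≤ 1 := by
        rw [abs_le]; constructor <;> linarith [hf0 n ω, hf1 n ω]
      linarith
    · simp only [Set.indicator_of_notMem (show ω ∉ {ω | ε / 2 < |f n ω - a|} from hω)]
      linarith
  · rw [integral_add (integrable_const _) hii,
      integral_indicator_one hms]
    simp only [integral_const, probReal_univ, one_smul]
    linarith [hn0 n hn.le]

/-- Truncation bound for square integrable variables. -/
lemma trunc_bound {Ω : Type*} [MeasurableSpace Ω] {P : Measure Ω} [IsProbabilityMeasure P]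
    {f : Ω → ℝ} (hf : Measurable f) (hf0 : ∀ ω, 0 ≤ f ω) {c : ℝ}
    (h2 : Integrable (fun ω => f ω ^ 2) P) (hc : ∫ ω, f ω ^ 2 ∂P ≤ c) {R : ℝ} (hR : 0 < R) :
    |∫ ω, f ω ∂P - ∫ ω, min (f ω) R ∂P| ≤ c / R := by
  have hi : Integrable f P :=
    ((memLp_two_iff_integrable_sq hf.aestronglyMeasurable).2 h2).integrable (by norm_num)
  have hi' : Integrable (fun ω => min (f ω) R) P := hi.inf (integrable_const R)
  rw [← integral_sub hi hi']
  refine abs_integral_le_integral_abs.trans ?_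
  refine (integral_mono (hi.sub hi').abs (h2.div_const R) fun ω => ?_).trans ?_
  · have h0 := hf0 ω
    simp only
    rw [le_div_iff₀ hR]
    rcases le_total (f ω) R with h | h
    · rw [Pi.sub_apply, min_eq_left h, sub_self, abs_zero, zero_mul]; positivity
    · rw [Pi.sub_apply, min_eq_right h, abs_of_nonneg (by linarith)]
      nlinarith
  · rw [integral_div]
    gcongr

/-- Monotone convergence: uniform bounds on truncated expectations bound the expectation. -/
lemma integrable_of_trunc {Ω : Type*} [MeasurableSpace Ω] {P : Measure Ω} [IsProbabilityMeasure P]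
    {f : Ω → ℝ} (hf : Measurable f) (hf0 : ∀ ω, 0 ≤ f ω) {c : ℝ} (hc : 0 ≤ c)
    (h : ∀ R : ℕ, ∫ ω, min (f ω) R ∂P ≤ c) : Integrable f P ∧ ∫ ω, f ω ∂P ≤ c := by
  have hle : ∫⁻ ω, ENNReal.ofReal (f ω) ∂P ≤ ENNReal.ofReal c := by
    have h1 : ∀ ω, ENNReal.ofReal (f ω) =
        liminf (fun R : ℕ => ENNReal.ofReal (min (f ω) R)) atTop := by
      intro ω
      refine (Tendsto.liminf_eq (tendsto_const_nhds.congr' ?_)).symm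
      obtain ⟨R0, hR0⟩ := exists_nat_ge (f ω)
      filter_upwards [eventually_ge_atTop R0] with R hR
      rw [min_eq_left (hR0.trans (by exact_mod_cast hR))]
    simp_rw [h1]
    refine (lintegral_liminf_le fun R => (hf.min measurable_const).ennreal_ofReal).trans ?_
    refine (liminf_le_liminf (v := fun _ => ENNReal.ofReal c) (.of_forall fun R => ?_)).trans
      (by simp)
    have hm0 : ∀ ω, 0 ≤ min (f ω) (R:ℝ) := fun ω => le_min (hf0 ω) (Nat.cast_nonneg R)
    have hi : Integrable (fun ω => min (f ω) (R:ℝ)) P :=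
      Integrable.of_bound (hf.min measurable_const).aestronglyMeasurable R (ae_of_all _ fun ω => by
        rw [Real.norm_of_nonneg (hm0 ω)]; exact min_le_right _ _)
    rw [← ofReal_integral_eq_lintegral_ofReal hi (ae_of_all _ hm0)]
    exact ENNReal.ofReal_le_ofReal (h R)
  have hi : Integrable f P := by
    refine ⟨hf.aestronglyMeasurable, ?_⟩
    rw [hasFiniteIntegral_iff_ofReal (ae_of_all _ hf0)]
    exact hle.trans_lt ENNReal.ofReal_lt_top
  refine ⟨hi, ?_⟩
  rw [integral_eq_lintegral_of_nonneg_ae (ae_of_all _ hf0) hi.aestronglyMeasurable]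
  exact ENNReal.toReal_le_of_le_ofReal hc hle

/-- An exponential moment bounds the second moment, because `x ^ 2 / 2 ≤ exp x` for `0 ≤ x`. -/
lemma sq_moment_le {Ω : Type*} [MeasurableSpace Ω] {μ : Measure Ω} {Z : Ω → ℕ} {lam C : ℝ}
    (hlam : 0 < lam)
    (h : ∫⁻ ω, ENNReal.ofReal (Real.exp (lam * (Z ω : ℝ))) ∂μ ≤ ENNReal.ofReal C) :
    ∫⁻ ω, ENNReal.ofReal ((Z ω : ℝ) ^ 2) ∂μ ≤ ENNReal.ofReal (max (2 / lam ^ 2 * C) 0) := by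
  have h1 : ∀ ω, ENNReal.ofReal ((Z ω : ℝ) ^ 2) ≤
      ENNReal.ofReal (2 / lam ^ 2) * ENNReal.ofReal (Real.exp (lam * (Z ω : ℝ))) := by
    intro ω
    rw [← ENNReal.ofReal_mul (by positivity)]
    refine ENNReal.ofReal_le_ofReal ?_
    have h2 := Real.quadratic_le_exp_of_nonneg (show 0 ≤ lam * (Z ω : ℝ) by positivity)
    have h3 : 0 ≤ lam * (Z ω : ℝ) := by positivity
    rw [div_mul_eq_mul_div, le_div_iff₀ (by positivity)]
    nlinarith
  refine (lintegral_mono h1).trans ?_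
  rw [lintegral_const_mul' _ _ ENNReal.ofReal_ne_top]
  refine (mul_le_mul_right h _).trans ?_
  rw [← ENNReal.ofReal_mul (by positivity)]
  exact ENNReal.ofReal_le_ofReal (le_max_left _ _)

/-! ### Passage to the limit -/

lemma tEqB_mem {n N : ℕ} [NeZero n] {A : ℕ → ℕ → ℕ} (hA : IsAdjOn N A) (B : ℕ → ℕ → ℕ) :
    0 ≤ tEqB N n A B ∧ tEqB N n A B ≤ 1 := by
  rw [← vertP_real_eq_tEqB hA]
  exact ⟨measureReal_nonneg, measureReal_le_one⟩

lemma tEqW_mem {W : ℝ → ℝ → ℕ → ℝ} (hW : IsMultigraphon W) {N : ℕ} {A : ℕ → ℕ → ℕ}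
    (hA : IsAdjOn N A) : 0 ≤ tEqW N A W ∧ tEqW N A W ≤ 1 := by
  rw [← sampleP_real_subMat hW hA]
  exact ⟨measureReal_nonneg, measureReal_le_one⟩

section assembly
variable {Ω : ℕ → Type*} [∀ n, MeasurableSpace (Ω n)] {μ : ∀ n, Measure (Ω n)}
  [∀ n, IsProbabilityMeasure (μ n)] {m : ℕ → ℕ} {X : ∀ n, Ω n → ℕ → ℕ → ℕ}
  (hX : ∀ n i j, Measurable fun ω => X n ω i j)
  (hadj : ∀ n ω, IsAdjOnM (n + 1) (m n) (X n ω))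
  {W : ℝ → ℝ → ℕ → ℝ} (hW : IsMultigraphon W)
  (hconv : ∀ (N : ℕ) (B : ℕ → ℕ → ℕ), IsAdjOn N B → ∀ ε > (0:ℝ),
    Tendsto (fun n => μ n {ω | ε < |tEqB N (n + 1) B (X n ω) - tEqW N B W|}) atTop (𝓝 0))
include hX hadj hW hconv

/-- Bounded functionals of the leading `N × N` block of the sampled matrix converge in mean to the
corresponding functional of the `W`-random multigraph. -/
lemma tendsto_integral_blowM (N : ℕ) {G : (ℕ → ℕ → ℕ) → ℝ} {R : ℝ} (hG : ∀ B, |G B| ≤ R) :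
    Tendsto (fun n => ∫ p, G (subMat N (blowM (X n) p)) ∂((μ n).prod (vertP (n + 1)))) atTop
      (𝓝 (∫ ω, G (subMat N (sampleM W ω)) ∂sampleP)) := by
  refine tendsto_integral_subMat (P := fun n => (μ n).prod (vertP (n + 1)))
    (M := fun n => blowM (X n)) (fun n i j => measurable_blowM (hX n) i j)
    (fun i j => measurable_sampleM hW i j) N (fun n => ae_of_all _ fun p => ?_)
    (ae_isAdjOn_sampleM hW N) (fun B hB => ?_) hG
  · obtain ⟨⟨h1, h2, -⟩, -⟩ := hadj n p.1
    refine ⟨fun i j => ?_, fun i => ?_, fun i j hij => ?_⟩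
    · simp only [subMat, blowM, and_comm (a := i < N), h1 (p.2 i) (p.2 j)]
    · simp only [subMat, blowM]
      split_ifs
      · exact h2 _
      · exact dvd_zero 2
    · rw [subMat, if_neg (by omega)]
  · rw [sampleP_real_subMat hW hB]
    simp_rw [fun n => (blowM_real_subMat (n := n + 1) (μ := μ n) (hX n) hB).2]
    exact tendsto_integral_of_prob
      (fun n => (blowM_real_subMat (n := n + 1) (μ := μ n) (hX n) hB).1)
      (fun n ω => (tEqB_mem hB _).1) (fun n ω => (tEqB_mem hB _).2)
      (tEqW_mem hW hB).1 (tEqW_mem hW hB).2 (hconv N B hB)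

/-- The functional involving empirical row averages depends on finitely many entries, so it passes
to the limit. -/
lemma tendsto_rowAvg {t : ℝ} (ht : 0 ≤ t) (k K : ℕ) (A : ℕ → ℕ → ℕ) {b : ℝ} (hb : 0 ≤ b) :
    Tendsto (fun n => ∫ p, queueProb t A k (blowM (X n) p) (rowAvg k K (blowM (X n) p)) b
        ∂((μ n).prod (vertP (n + 1)))) atTop
      (𝓝 (∫ ω, queueProb t A k (sampleM W ω) (rowAvg k K (sampleM W ω)) b ∂sampleP)) := by
  have hlim := tendsto_integral_blowM hX hadj hW hconv (k + K)
    (G := fun B => queueProb t A k B (rowAvg k K B) b) (R := 1) (fun B => by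
      rw [abs_of_nonneg (queueProb_nonneg ht A k B (rowAvg_nonneg k K B) hb)]
      exact queueProb_le_one ht A k B (rowAvg_nonneg k K B) hb)
  have hcut : ∀ B, queueProb t A k (subMat (k + K) B) (rowAvg k K (subMat (k + K) B)) b =
      queueProb t A k B (rowAvg k K B) b := by
    intro B
    refine queueProb_congr (fun i hi j hj => ?_) fun i hi => ?_
    · rw [subMat, if_pos (by omega)]
    · unfold rowAvg
      congr 1
      refine Finset.sum_congr rfl fun j hj => ?_
      have := Finset.mem_range.1 hj
      rw [subMat, if_pos (by omega)]
  simp_rw [hcut] at hlim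
  exact hlim

variable {c : ℝ} (hc : 0 ≤ c)
  (hsq : ∀ n, ∀ i < n + 1, ∀ j < n + 1,
    ∫⁻ ω, ENNReal.ofReal ((X n ω i j : ℝ) ^ 2) ∂(μ n) ≤ ENNReal.ofReal c)
include hc hsq

/-- The second moment bound passes to the `W`-random multigraph. -/
lemma sampleM_sq :
    Integrable (fun ω => (sampleM W ω 0 1 : ℝ) ^ 2) sampleP ∧
      ∫ ω, (sampleM W ω 0 1 : ℝ) ^ 2 ∂sampleP ≤ c := by
  have hm : Measurable fun ω => (sampleM W ω 0 1 : ℝ) :=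
    (measurable_of_countable fun l : ℕ => (l : ℝ)).comp (measurable_sampleM hW 0 1)
  refine integrable_of_trunc (hm.pow_const 2) (fun ω => sq_nonneg _) hc fun R => ?_
  have hlim := tendsto_integral_blowM hX hadj hW hconv 2
    (G := fun B => min ((B 0 1 : ℝ) ^ 2) R) (R := R) (fun B => by
      rw [abs_of_nonneg (by positivity)]; exact min_le_right _ _)
  simp only [subMat, show (0 < 2 ∧ 1 < 2) = True by simp, if_true] at hlim
  refine le_of_tendsto' hlim fun n => ?_
  obtain ⟨h1, h2, -⟩ := integral_blowM (μ := μ n) (hX n) (hadj n) hc (hsq n)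
  exact (integral_mono (h1.inf (integrable_const _)) h1 fun p => min_le_left _ _).trans h2

/-- `sampleM_sq` in terms of `rowFun`. -/
lemma rowFun_sq :
    Integrable (fun p : ℝ × ℝ × ℝ => rowFun W p.1 p.2 ^ 2) (unitM.prod (unitM.prod unitM)) ∧
      ∫ p : ℝ × ℝ × ℝ, rowFun W p.1 p.2 ^ 2 ∂(unitM.prod (unitM.prod unitM)) ≤ c := by
  have hm : Measurable fun p : ℝ × ℝ × ℝ => rowFun W p.1 p.2 ^ 2 :=
    (show Measurable fun p : ℝ × ℝ × ℝ => rowFun W p.1 p.2 from measurable_rowFun hW).pow_const 2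
  have hmp := measurePreserving_entry (i := 0) (j := 1) (by simp)
  have he : ∀ ω, (sampleM W ω 0 1 : ℝ) ^ 2 =
      (fun p : ℝ × ℝ × ℝ => rowFun W p.1 p.2 ^ 2)
        (ω (.inl 0), (ω (.inl 1), ω (.inr (0, 1)))) := fun ω => by
    rw [sampleM_of_le W ω (Nat.zero_le 1)]; rfl
  obtain ⟨h1, h2⟩ := sampleM_sq hX hadj hW hconv hc hsq
  simp_rw [he] at h1 h2
  refine ⟨(hmp.integrable_comp hm.aestronglyMeasurable).1 h1, ?_⟩
  rw [← hmp.map_eq, integral_map hmp.measurable.aemeasurable hm.aestronglyMeasurable]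
  exact h2

/-- The edge densities of the multigraphs converge to that of `W`: uniform integrability follows
from the second moment bound. -/
lemma tendsto_density :
    Tendsto (fun n => 2 * m n / ((n + 1 : ℕ) : ℝ) ^ 2) atTop (𝓝 (rhoW W)) := by
  obtain ⟨s1, s2⟩ := sampleM_sq hX hadj hW hconv hc hsq
  obtain ⟨r1, -⟩ := rowFun_sq hX hadj hW hconv hc hsq
  have hm : Measurable fun ω => (sampleM W ω 0 1 : ℝ) :=
    (measurable_of_countable fun l : ℕ => (l : ℝ)).comp (measurable_sampleM hW 0 1)
  have hρ : ∫ ω, (sampleM W ω 0 1 : ℝ) ∂sampleP = rhoW W := by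
    have hmr : Measurable fun p : ℝ × ℝ × ℝ => rowFun W p.1 p.2 := measurable_rowFun hW
    have hmp := measurePreserving_entry (i := 0) (j := 1) (by simp)
    rw [← integral_rowFun_eq_rhoW hW r1, ← hmp.map_eq,
      integral_map hmp.measurable.aemeasurable hmr.aestronglyMeasurable]
    refine integral_congr_ae (ae_of_all _ fun ω => ?_)
    simp only
    rw [sampleM_of_le W ω (Nat.zero_le 1)]; rfl
  rw [Metric.tendsto_atTop']
  intro ε hε
  -- Truncation at level `R` costs at most `c / R` in each mean, and the truncated means converge.
  obtain ⟨R, hR0, hR⟩ : ∃ R : ℝ, 0 < R ∧ c / R < ε / 3 := by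
    refine ⟨3 * (c + 1) / ε, by positivity, ?_⟩
    rw [div_lt_iff₀ (by positivity)]
    have : ε / 3 * (3 * (c + 1) / ε) = c + 1 := by field_simp
    linarith
  have hlim := tendsto_integral_blowM hX hadj hW hconv 2
    (G := fun B => min (B 0 1 : ℝ) R) (R := R) (fun B => by
      rw [abs_of_nonneg (by positivity)]; exact min_le_right _ _)
  simp only [subMat, show (0 < 2 ∧ 1 < 2) = True by simp, if_true] at hlim
  obtain ⟨n0, hn0⟩ := Metric.tendsto_atTop'.1 hlim (ε / 3) (by positivity)
  refine ⟨n0, fun n hn => ?_⟩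
  obtain ⟨h1, h2, h3⟩ := integral_blowM (μ := μ n) (hX n) (hadj n) hc (hsq n)
  have hmb : Measurable fun p => (blowM (n := n + 1) (X n) p 0 1 : ℝ) :=
    (measurable_of_countable fun l : ℕ => (l : ℝ)).comp (measurable_blowM (hX n) 0 1)
  have t1 := trunc_bound hmb (fun p => Nat.cast_nonneg _) h1 h2 hR0
  have t2 := trunc_bound hm (fun p => Nat.cast_nonneg _) s1 s2 hR0
  have t3 := hn0 n hn
  rw [Real.dist_eq] at t3 ⊢
  rw [h3] at t1
  rw [hρ] at t2
  rw [abs_le] at t1 t2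
  rw [abs_lt] at t3 ⊢
  constructor <;> linarith [t1.1, t1.2, t2.1, t2.2, t3.1, t3.2]

/-- The limit along the sampled vertices: the errors made by replacing degrees with averages over
`L ^ 2` entries vanish as `L → ∞`, uniformly in `n`. -/
lemma tendsto_yMarg (hρ : 0 < rhoW W) (hex : ∀ n, VertexExchangeable (μ n) (n + 1) (X n))
    {t : ℝ} (ht : 0 ≤ t) {k : ℕ} {A : ℕ → ℕ → ℕ} (hA : IsAdjOn k A) :
    Tendsto (fun n => ∫ ω, yMarg k (n + 1) (m n) (X n ω) t A ∂(μ n)) atTop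
      (𝓝 (tEqW k A (WtER W t))) := by
  set b : ℝ := (rhoW W)⁻¹ with hb
  have hb0 : 0 ≤ b := by positivity
  set a : ℕ → ℝ := fun n => (2 * m n / ((n + 1 : ℕ) : ℝ) ^ 2)⁻¹ with ha
  have ha0 : ∀ n, 0 ≤ a n := fun n => by positivity
  have hab : Tendsto a atTop (𝓝 b) :=
    (tendsto_density hX hadj hW hconv hc hsq).inv₀ hρ.ne'
  obtain ⟨r1, r2⟩ := rowFun_sq hX hadj hW hconv hc hsq
  have hL : Tendsto (fun L : ℕ => 2 * replErr k c b b L) atTop (𝓝 0) := by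
    have i1 : Tendsto (fun L : ℕ => ((L : ℝ))⁻¹) atTop (𝓝 0) := tendsto_inv_atTop_nhds_zero_nat
    have h : Tendsto (fun L : ℕ => 2 * ((k : ℝ) ^ 2 * (b * (k * c * (L : ℝ)⁻¹ +
        ((L : ℝ)⁻¹ * (k * c) + (L : ℝ)⁻¹ * (L : ℝ)⁻¹ * (k * c)))))) atTop
        (𝓝 (2 * ((k : ℝ) ^ 2 * (b * (k * c * 0 + (0 * (k * c) + 0 * 0 * (k * c))))))) :=
      ((((i1.const_mul _).add ((i1.mul_const _).add
        ((i1.mul i1).mul_const _))).const_mul _).const_mul _).const_mul _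
    simp only [mul_zero, zero_mul, add_zero] at h
    refine h.congr' ?_
    filter_upwards [eventually_ge_atTop 1] with L hL1
    have : (L : ℝ) ≠ 0 := by positivity
    simp only [replErr, sub_self, abs_zero, zero_mul, zero_add]
    field_simp
  rw [Metric.tendsto_atTop']
  intro ε hε
  obtain ⟨L, hLs, hL1⟩ := ((hL.eventually (gt_mem_nhds (half_pos hε))).and
    (eventually_ge_atTop 1)).exists
  have hlim := tendsto_rowAvg hX hadj hW hconv ht k (L ^ 2) A hb0
  set I := ∫ ω, queueProb t A k (sampleM W ω) (rowAvg k (L ^ 2) (sampleM W ω)) b ∂sampleP with hI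
  have e1 : Tendsto (fun n : ℕ => (k : ℝ) ^ 2 / ((n + 1 : ℕ) : ℝ)) atTop (𝓝 0) :=
    (tendsto_const_div_atTop_nhds_zero_nat ((k : ℝ) ^ 2)).comp (tendsto_add_atTop_nat 1)
  have e2 : Tendsto (fun n => replErr k c (a n) b L) atTop (𝓝 (replErr k c b b L)) := by
    unfold replErr
    exact (((hab.sub_const b).abs.mul_const _).add_const _).const_mul _
  have e3 := (hlim.sub_const I).abs
  rw [sub_self, abs_zero] at e3
  have e4 := ((e1.add e2).add e3).add_const (replErr k c b b L)
  obtain ⟨n0, hn0⟩ := eventually_atTop.1 (e4.eventually (gt_mem_nhds (show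
    0 + replErr k c b b L + 0 + replErr k c b b L < ε by linarith)))
  refine ⟨n0, fun n hn => lt_of_le_of_lt ?_ (hn0 n hn.le)⟩
  -- Four comparisons: sampled vertices (`s1`), row averages in place of degrees (`s2`), the
  -- `W`-random multigraph in place of the finite one, degrees in place of row averages (`s3`).
  have s1 := yMarg_sampling (n := n + 1) (m := m n) (hX n) (fun ω => (hadj n ω).1) (hex n) ht k A
  have s2 := vert_replace (n := n + 1) (μ := μ n) (hX n) hc (hsq n) ht k A hL1 (ha0 n) hb0
  have s3 := sample_replace hW r1 r2 ht k A hL1 hb0 hb0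
  rw [integral_queueProb_sample hW hρ r1 ht hA, abs_sub_comm] at s3
  rw [Real.dist_eq]
  exact (abs_sub_le _ _ _).trans (add_le_add ((abs_sub_le _ _ _).trans (add_le_add
    ((abs_sub_le _ _ _).trans (add_le_add s1 s2)) le_rfl)) s3)

end assembly

end

/-- The independent-queue process converges to the `W_t`-random multigraph:
`lim_n P(Y_n^{[k]}(t) = A) = t_=(A, W_t)`. -/
theorem queue_process_converges_to_Wt
    (κ : ℝ) (hκ : 0 < κ) (k : ℕ)
    (Ω : ℕ → Type) [∀ n, MeasurableSpace (Ω n)]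
    (μ : ∀ n, Measure (Ω n)) (hprob : ∀ n, IsProbabilityMeasure (μ n))
    (m : ℕ → ℕ) (X0 : ∀ n, Ω n → ℕ → ℕ → ℕ)
    (hmeas : ∀ n i j, Measurable fun ω => X0 n ω i j)
    (hadj : ∀ n ω, IsAdjOnM n (m n) (X0 n ω))
    (hexch : ∀ n, VertexExchangeable (μ n) n (X0 n))
    (W : ℝ → ℝ → ℕ → ℝ) (hW : IsMultigraphon W)
    (hρpos : 0 < rhoW W) (hρfin : IntegrableOn (degW W) (Icc (0:ℝ) 1))
    (hconv : ∀ (k' : ℕ) (A : ℕ → ℕ → ℕ), IsAdjOn k' A → ∀ ε > (0:ℝ),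
      Tendsto (fun n => μ n {ω | ε < |tEqB k' n A (X0 n ω) - tEqW k' A W|}) atTop (𝓝 0))
    (lam C : ℝ) (hlam : 0 < lam)
    (hmom : ∀ n, ∀ i < n, ∀ j < n,
      ∫⁻ ω, ENNReal.ofReal (Real.exp (lam * (X0 n ω i j : ℝ))) ∂(μ n) ≤ ENNReal.ofReal C)
    (t : ℝ) (ht : 0 ≤ t) (A : ℕ → ℕ → ℕ) (hA : IsAdjOn k A) :
    Tendsto (fun n => ∫ ω, yMarg k n (m n) (X0 n ω) t A ∂(μ n))
      atTop (𝓝 (tEqW k A (WtER W t))) := by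
  -- The argument runs along `n + 1`, so that the uniform distribution on the vertices exists.
  refine (tendsto_add_atTop_iff_nat 1).1 ?_
  have := fun n => hprob (n + 1)
  exact tendsto_yMarg (Ω := fun n => Ω (n + 1)) (μ := fun n => μ (n + 1))
    (m := fun n => m (n + 1)) (X := fun n => X0 (n + 1))
    (fun n => hmeas (n + 1)) (fun n => hadj (n + 1)) hW
    (fun N B hB ε hε => (hconv N B hB ε hε).comp (tendsto_add_atTop_nat 1))
    (c := max (2 / lam ^ 2 * C) 0) (le_max_right _ _)
    (fun n i hi j hj => sq_moment_le hlam (hmom (n + 1) i hi j hj)) hρpos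
    (fun n => hexch (n + 1)) ht hA

end
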